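/- arXiv:math/0702114 — 6 statements merged into one kernel-verified Lean document; each statement's English description precedes it below -/
import Mathlib

section
/- The set of singular points of the sextic surface F₁·S₂,₃,₄,₅,₆ − S³ = 0 in ℙ³(ℂ) equals the set {[x] ∈ ℙ³(ℂ) : F₁(x) = S₂,₃,₄,₅,₆(x) = S(x) = 0}, and this set has exactly 10 elements. -/
open MvPolynomial

/-- The quadric `S = y₀·y₁ − y₂·y₃`. -/
noncomputable def polyS : MvPolynomial (Fin 4) ℂ := X 0 * X 1 - X 2 * X 3

/-- The six linear forms `F₁, …, F₆` (indexed by `Fin 6`). -/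
noncomputable def polyF : Fin 6 → MvPolynomial (Fin 4) ℂ :=
  ![X 0,
    X 1,
    4 * X 0 - 2 * X 2 - 2 * X 3 + X 1,
    X 0 - 2 * X 2 - 2 * X 3 + 4 * X 1,
    X 0 + X 2 + X 3 + X 1,
    X 0 - X 2 - X 3 + X 1]
/-- The quadric `R = y₀² + y₁² + y₂² + y₃²`. -/
noncomputable def polyR : MvPolynomial (Fin 4) ℂ := X 0 ^ 2 + X 1 ^ 2 + X 2 ^ 2 + X 3 ^ 2

/-- The linear form `R₁ = y₀ + 2y₂ + 3y₃ + 4y₁`. -/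
noncomputable def polyR1 : MvPolynomial (Fin 4) ℂ := X 0 + 2 * X 2 + 3 * X 3 + 4 * X 1

/-- The linear form `R₂ = 4y₀ + 3y₂ + 2y₃ + y₁`. -/
noncomputable def polyR2 : MvPolynomial (Fin 4) ℂ := 4 * X 0 + 3 * X 2 + 2 * X 3 + X 1

noncomputable def polyS12 : MvPolynomial (Fin 4) ℂ := polyF 0 * polyF 1 + 2 * polyS
noncomputable def polyS23 : MvPolynomial (Fin 4) ℂ := polyF 1 * polyF 2 + 2 * polyS
noncomputable def polyS34 : MvPolynomial (Fin 4) ℂ := polyF 2 * polyF 3 + 2 * polyS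
noncomputable def polyS56 : MvPolynomial (Fin 4) ℂ := polyF 4 * polyF 5 + 2 * polyS
noncomputable def polyS123 : MvPolynomial (Fin 4) ℂ := polyF 0 * polyF 1 * polyF 2 + polyS * polyR1
noncomputable def polyS456 : MvPolynomial (Fin 4) ℂ := polyF 3 * polyF 4 * polyF 5 + polyS * polyR2
noncomputable def polyS3456 : MvPolynomial (Fin 4) ℂ :=
  polyF 2 * polyF 3 * polyF 4 * polyF 5 + polyS * polyR
noncomputable def polyS23456 : MvPolynomial (Fin 4) ℂ :=
  polyF 1 * polyF 2 * polyF 3 * polyF 4 * polyF 5 + polyR1 * polyS * polyR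
/-- The sextic `F₁·S₂,₃,₄,₅,₆ − S³`. -/
noncomputable def polySextic8 : MvPolynomial (Fin 4) ℂ := polyF 0 * polyS23456 - polyS ^ 3

/-! ### A small reflective checker for polynomial identities -/

/-- Addition of coefficient lists. -/
def listAdd {α : Type} (f : α → α → α) : List α → List α → List α
  | [], m => m
  | a :: l, [] => a :: l
  | a :: l, b :: m => f a b :: listAdd f l m

/-- Multiplication of coefficient lists. -/
def listMul {α : Type} (f g : α → α → α) (z : α) : List α → List α → List α
  | [], _ => []
  | a :: l, m => listAdd f (m.map (g a)) (z :: listMul f g z l m)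

/-- Evaluation of a coefficient list. -/
def listEv {α K : Type} [CommRing K] (ev : α → K) (x : K) : List α → K
  | [] => 0
  | a :: l => ev a + x * listEv ev x l

section
variable {α K : Type} [CommRing K] (ev : α → K) (x : K)

theorem listEv_add (f : α → α → α) (hf : ∀ a b, ev (f a b) = ev a + ev b) (l m : List α) :
    listEv ev x (listAdd f l m) = listEv ev x l + listEv ev x m := by
  induction l generalizing m with
  | nil => simp [listAdd, listEv]
  | cons a l ih =>
    cases m with
    | nil => simp [listAdd, listEv]
    | cons b m => simp only [listAdd, listEv, hf, ih]; ring

theorem listEv_map (g : α → α → α) (hg : ∀ a b, ev (g a b) = ev a * ev b) (a : α) (m : List α) :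
    listEv ev x (m.map (g a)) = ev a * listEv ev x m := by
  induction m with
  | nil => simp [listEv]
  | cons b m ih => simp only [List.map, listEv, hg, ih]; ring

theorem listEv_mul (f g : α → α → α) (z : α) (hf : ∀ a b, ev (f a b) = ev a + ev b)
    (hg : ∀ a b, ev (g a b) = ev a * ev b) (hz : ev z = 0) (l m : List α) :
    listEv ev x (listMul f g z l m) = listEv ev x l * listEv ev x m := by
  induction l with
  | nil => simp [listMul, listEv]
  | cons a l ih =>
    simp only [listMul, listEv_add ev x f hf, listEv_map ev x g hg, listEv, hz, ih]; ring

theorem listEv_all (c : α → Bool) (hc : ∀ a, c a = true → ev a = 0) (l : List α)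
    (h : l.all c = true) : listEv ev x l = 0 := by
  induction l with
  | nil => simp [listEv]
  | cons a l ih =>
    simp only [List.all_cons, Bool.and_eq_true] at h
    simp [listEv, hc a h.1, ih h.2]

end

def add1 : List ℤ → List ℤ → List ℤ := listAdd Int.add
def mul1 : List ℤ → List ℤ → List ℤ := listMul Int.add Int.mul 0
def add2 : List (List ℤ) → List (List ℤ) → List (List ℤ) := listAdd add1
def mul2 : List (List ℤ) → List (List ℤ) → List (List ℤ) := listMul add1 mul1 []
def add3 : List (List (List ℤ)) → List (List (List ℤ)) → List (List (List ℤ)) := listAdd add2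
def mul3 : List (List (List ℤ)) → List (List (List ℤ)) → List (List (List ℤ)) :=
  listMul add2 mul2 []

/-- Evaluation of a nested coefficient list. -/
def ev3 {K : Type} [CommRing K] (b c d : K) (l : List (List (List ℤ))) : K :=
  listEv (listEv (listEv (fun n : ℤ => (n : K)) d) c) b l

section
variable {K : Type} [CommRing K] (b c d : K)

theorem ev1_add (l m : List ℤ) : listEv (fun n : ℤ => (n : K)) d (add1 l m)
    = listEv (fun n : ℤ => (n : K)) d l + listEv (fun n : ℤ => (n : K)) d m :=
  listEv_add _ _ _ (fun a b => Int.cast_add a b) _ _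

theorem ev1_mul (l m : List ℤ) : listEv (fun n : ℤ => (n : K)) d (mul1 l m)
    = listEv (fun n : ℤ => (n : K)) d l * listEv (fun n : ℤ => (n : K)) d m :=
  listEv_mul _ _ _ _ _ (fun a b => Int.cast_add a b) (fun a b => Int.cast_mul a b)
    Int.cast_zero _ _

theorem ev2_add (l m : List (List ℤ)) :
    listEv (listEv (fun n : ℤ => (n : K)) d) c (add2 l m)
    = listEv (listEv (fun n : ℤ => (n : K)) d) c l + listEv (listEv (fun n : ℤ => (n : K)) d) c m :=
  listEv_add _ _ _ (ev1_add d) _ _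

theorem ev2_mul (l m : List (List ℤ)) :
    listEv (listEv (fun n : ℤ => (n : K)) d) c (mul2 l m)
    = listEv (listEv (fun n : ℤ => (n : K)) d) c l * listEv (listEv (fun n : ℤ => (n : K)) d) c m :=
  listEv_mul _ _ _ _ _ (ev1_add d) (ev1_mul d) rfl _ _

theorem ev3_add (l m : List (List (List ℤ))) :
    ev3 b c d (add3 l m) = ev3 b c d l + ev3 b c d m :=
  listEv_add _ _ _ (ev2_add c d) _ _

theorem ev3_mul (l m : List (List (List ℤ))) :
    ev3 b c d (mul3 l m) = ev3 b c d l * ev3 b c d m :=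
  listEv_mul _ _ _ _ _ (ev2_add c d) (ev2_mul c d) rfl _ _

theorem ev3_all (h19 : (19 : K) = 0) (l : List (List (List ℤ)))
    (h : l.all (fun m => m.all (fun k => k.all (fun n => Int.emod n 19 == 0))) = true) :
    ev3 b c d l = 0 := by
  refine listEv_all _ _ _ (fun m hm => listEv_all _ _ _ (fun k hk => listEv_all _ _ _
    (fun n hn => ?_) k hk) m hm) l h
  have h1 : (19 : ℤ) ∣ n := Int.dvd_of_emod_eq_zero (eq_of_beq hn)
  obtain ⟨t, rfl⟩ := h1
  push_cast
  rw [h19, zero_mul]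

end

/-- Coefficients of the partial derivative number 0 at `y₀ = 1`. -/
def gradL0 : List (List (List ℤ)) :=
  [[[], [0, -4, -9, -2, -3], [0, -6, 0, -2], [0, -2, -3], [0, -2]],
  [[25, -28, 3, 26, -4],
    [-32, -12, 64, -20], [3, 66, -27], [24, -20], [-4]],
  [[116, -90, -10, 10], [-90, -32,
    27], [-10, 28], [10]],
  [[126, -54], [-56, -4]],
  [[58, -10], [-10]],
  [[4]]]

/-- Coefficients of the partial derivative number 1 at `y₀ = 1`. -/
def gradL1 : List (List (List ℤ)) :=
  [[[5, -7, 1, 13, -4], [-8, -4, 32, -20], [1, 33, -27], [12, -20], [-4]],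
  [[58, -60, -10,
    20], [-60, -32, 54], [-10, 56], [20]],
  [[126, -81], [-84, -12]],
  [[116, -40], [-40]],
     [[20]]]

/-- Coefficients of the partial derivative number 2 at `y₀ = 1`. -/
def gradL2 : List (List (List ℤ)) :=
  [[[0, -1, -3, -1, -3], [0, -4, 0, -4], [0, -3, -9, 3], [0, -8]],
  [[-8, -4, 32, -20], [2,
    66, -54], [36, -60], [-16]],
  [[-30, -16, 27], [-10, 56], [30]],
  [[-28, -4]],
  [[-10]]]

/-- Coefficients of the partial derivative number 3 at `y₀ = 1`. -/
def gradL3 : List (List (List ℤ)) :=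
  [[[], [-1, -6, -3, -12], [-2, 0, -6], [-1, -6, 3], [-2]],
  [[-7, 2, 39, -16], [-4, 64, -60],
    [33, -54], [-20]],
  [[-30, -10, 30], [-16, 54], [28]],
  [[-27], [-4]],
  [[-10]]]

/-- Multiplier of the partial derivative number 0 in the certificate modulo 19. -/
def certL0 : List (List (List ℤ)) :=
  [[[0, 0, 0, 0, 0, 0, 0, 0, 0, -2, 6], [0, 0, 0, 0, 0, 0, 0, 0, 6, -3], [0, 0, 0, 0, 0, 0, 0,
    5, -7, 1], [0, 0, 0, 0, 0, 0, 7, -3, -5], [0, 0, 0, 0, 0, 3, 2, 8], [0, 0, 0, 0, 4, 3,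
    -5], [0, 0, 0, -7, 2, -3], [0, 0, 8, -8, -6], [0, -3, 8, -7], [8, -6, -4], [5]],
  [[0,
    0, 0, 0, 0, 0, 0, 0, 9, 1], [0, 0, 0, 0, 0, 0, 0, -4, -2], [0, 0, 0, 0, 0, 0, 0, -5, 1],
    [0, 0, 0, 0, 0, -9, -6, -1], [0, 0, 0, 0, -3, -4, 5], [0, 0, 0, 2, -2, 8], [0, 0, -1, -2,
    4], [0, -8, -8, -7], [7, -2, -1], [9]],
  [[0, 0, 0, 0, 0, 0, 0, -8, -2], [0, 0, 0, 0,
    0, 0, 0, -1], [0, 0, 0, 0, 0, 4, 2, -6], [0, 0, 0, 0, 0, 0, 7], [0, 0, 0, 0, -9], [0, 0,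
    6, 6, -9], [0, -6, 8, -1], [3, -9, 2], [4]],
  [[], [0, 0, 0, 0, 0, -4, -9], [0, 0, 0,
    0, 4, 1, -8], [0, 0, 0, -6, 0, -3], [0, 0, 8, 8, 4], [0, 2, 1, -5], [1, -1, 7], [-1]],
     [[0, 0, 0, 0, 0, 2, -7], [0, 0, 0, 0, 7, 9], [0, 0, 0, 9, 1, 6], [0, 0, -1, 7, -4], [0,
    1, 0, 6], [7, 5], [-1]],
  [[0, 0, 0, 0, 6, 9], [0, 0, 0, -8, 9], [0, 0, -8, -5, 3], [0,
    0, 6, -4], [-5, 9, 8], [-1]],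
  [[0, 0, 0, 7, 7], [0, 0, -5, 6], [0, 2, 3, -8], [-6, 8,
    -4]],
  [[0, 0, 0, -2], [0, 0, -1], [0, -1]],
  [[0, 0, -1], [0, 9]],
  [[0, 8], [7]],
     [[5]]]

/-- Multiplier of the partial derivative number 1 in the certificate modulo 19. -/
def certL1 : List (List (List ℤ)) :=
  [[[4, -2, 4, 7, 6, -5, -8, -5, -1, -9, -6], [-5, -7, -3, 4, 2, -5, 2, -6, -7, 5, -9], [-5,
    5, -1, -3, 4, 6, 8, -1, -9, 2], [-9, 1, -2, 4, 1, 4, -3, 5, -7], [-2, -4, 3, 6, 7, 8, 8,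
    5], [-1, -3, 6, -3, 1], [5, 0, 9, -6, -6, -3], [2, 5, 4, 2, 5], [4, -8, -7, -7], [0, 3,
    -5], [6, 1]],
  [[3, 7, 0, 6, 4, 5, -4, -9, -5, 2, -1], [-7, 0, 8, 4, 6, -9, -2, 2, -5,
    -4], [-2, 3, -9, 3, 0, 3, 1, -1, -1], [-2, 4, -9, 7, 6, -2, -3, -6], [-9, 0, 1, 9, 3, -8,
    7], [9, -2, -1, -9, 7, 3], [8, 0, 8, 6, 4], [1, -6, -4, 3], [8, -3, 5], [1, 3], [-5]],
     [[5, 1, -1, 0, 7, -1, 6, 0, 0, 5], [3, -6, -9, -4, -6, 7, -3, -7, 4], [-9, 4, -4, 8, -3,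
    9, 5], [-6, 8, 1, 8, -6, 6, 1], [4, -3, 6, -1, 7, 9], [1, 6, 0, 9, 2], [-8, 5, -7, -7],
    [-4, -3, 3], [1, 8], [-3]],
  [[-6, 2, 8, -4, -5, 6, 1, 3, -7], [-1, 6, -4, 1, -1, 0, -9,
    4], [3, 9, -1, 2, -5, -6, 3], [-7, -7, -6, -9, -2, -2], [5, 6, -5, -2, 9], [-5, 2, 2, 7],
    [3, -6, 9], [-6, -2], [-1]],
  [[-9, 0, -9, -6, 6, -5, -2, -3], [7, -4, -2, 7, -9], [-9,
    3, -9, 8, -1, 2], [-9, 9, 8, -4, 4], [-6, -6, 3, -7], [2, 0, -7], [-1, -4], [-9]],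
  [[6,
    0, 8, -6, 3, -8, -5], [-6, 1, 3, 5, -8, 6], [4, -7, -8, 7, 6], [-8, 5, -5, -1], [6, 8,
    6], [7, 6], [-5]],
  [[-1, 5, -1, 0, -7, 6], [-4, 0, 9, 4, -5], [4, -1, -5, -3], [9, -7],
    [3, -3], [-2]],
  [[2, 7, 1, 2, -9], [6, -2, 3, 8], [2, 6, -4], [0, 3], [-6]],
  [[9, -2,
    -1, -1], [3, 6, 5], [-8, 7], [-3]],
  [[4, -2, 9], [-9]],
  [[-4, -4], [9]],
  [[7]]]

/-- Multiplier of the partial derivative number 2 in the certificate modulo 19. -/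
def certL2 : List (List (List ℤ)) :=
  [[[0, 0, 0, 0, 0, 0, 0, 9, -2, -4, 8], [0, 0, 0, 0, 0, 0, 0, 0, -9, -3, -7], [0, 0, 0, 0, 0,
    0, 0, -9, 4, -6], [0, 0, 0, 0, 0, 0, 0, 5, -3], [0, 0, 0, 0, 0, -1, -6, 7], [0, 0, 0, 0,
    8, 0, -3], [0, 0, 0, 4, -1, 1], [0, 0, -7, -8, 8], [0, 0, 9, -4], [2, -9, 3], [3, 4], [7]],
     [[0, 0, 0, 0, 0, 0, 0, 0, 7, -7, -5], [0, 0, 0, 0, 0, 0, 0, -6, 5, -5], [0, 0, 0, 0, 0,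
    0, -8, 3, -4], [0, 0, 0, 0, 0, 7, -7, 5], [0, 0, 0, 0, 6, -2, -9], [0, 0, 0, -4, 4, -6],
    [0, 0, -6, -6, -6], [0, -2, -4], [-9, -7, 8], [6, -1], [1]],
  [[0, 0, 0, 0, 0, 0, 0, 2,
    -1, -2], [0, 0, 0, 0, 0, 0, 6, -9, -6], [0, 0, 0, 0, 0, -2, 6, 7], [0, 0, 0, 0, 1, 9, -5],
    [0, 0, 0, -8, -9, 8], [0, 0, 3, 4, 5], [0, 7, -8, -5], [3, -4, -1], [6, -2], [8]],
  [[0,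
    0, 0, 0, 0, 0, 2, 8, -5], [0, 0, 0, 0, 0, 9, -9, 1], [0, 0, 0, 0, -8, 9, 2], [0, 0, 0,
    -4, 8], [0, 0, -2, -3, 2], [0, 8, -1, 1], [-8, -7, -5], [6, -4], [-6]],
  [[0, 0, 0, 0,
    0, 4, 7], [0, 0, 0, 0, -8, 3, -7], [0, 0, 0, -6, 5], [0, 0, -4, 1, -3], [0, -5, 8, -5],
    [-5, 6, 1], [-8, -9], [7]],
  [[0, 0, 0, 0, 3, -8, 5], [0, 0, 0, 9, 0, -5], [0, 0, 5, -3,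
    9], [0, 7, 7, -5], [-1, 1, -5], [3, -4], [-6]],
  [[0, 0, 0, 5, -9, 7], [0, 0, -1, 7, 1],
    [0, 3, 6, 1], [4, 2, -3], [8, 9], [-7]],
  [[0, 0, -1, 8, 5], [0, 0, -4, 1], [0, 9, 7],
    [8, 9], [8]],
  [[0, 0, 4, -6], [0, 3, -3], [-3, -5], [-3]],
  [[0, 4, 2], [0, -7], [-3]],
     [[-8, 1], [-3]],
  [[-2]]]

/-- Multiplier of the partial derivative number 3 in the certificate modulo 19. -/
def certL3 : List (List (List ℤ)) :=
  [[[0, 0, 0, 0, 0, 0, 0, 0, 0, -2, 9, 8], [0, 0, 0, 0, 0, 0, 0, 0, 4, -2, 8], [0, 0, 0, 0, 0,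
    0, 0, -7, 8, -4], [0, 0, 0, 0, 0, 0, 6, -3, 8], [0, 0, 0, 0, 0, -4, -4, -5], [0, 0, 0,
    0, 8, -5, 4], [0, 0, 0, -5, -3], [5, 0, -3, 3], [5, -5, -5, -4], [4, -4], [7, 3]],
  [[0,
    0, 0, 0, 0, 0, 0, 0, 2, 5, 6], [0, 0, 0, 0, 0, 0, 0, 1, -4, 9], [0, 0, 0, 0, 0, 0, 0, 4,
    -4], [0, 0, 0, 0, 0, -2, -5, -9], [0, 0, 0, 0, 7, -2, 6], [0, 0, 0, 5, -9, 9], [0, 0, -4,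
    0, 4], [0, -3, 8, -1], [-9, -1, 6], [-1, -6], [1]],
  [[0, 0, 0, 0, 0, 0, 0, -8, -8, -6],
    [0, 0, 0, 0, 0, 0, 1, 2, -5], [0, 0, 0, 0, 0, 0, 0, 8], [0, 0, 0, 0, 8, -8, -1], [0, 0,
    0, -7, 9, -9], [0, 0, 9, 1, 9], [0, 5, 3, 4], [-5, 5, -8], [4], [-7]],
  [[0, 0, 0, 0,
    0, 0, 7, 3, -6], [0, 0, 0, 0, 0, -6, 5, 3], [0, 0, 0, 0, -1, -7, 7], [0, 0, 0, 8, 3, -6],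
    [0, 0, -3, -9, -8], [0, -3, 5, 3], [-7, -1, 8], [6, -7], [6]],
  [[0, 0, 0, 0, 0, 2, -6,
    6], [0, 0, 0, 0, 2, 5, -9], [0, 0, 0, 8, -2, 4], [0, 0, -9, -4, -9], [0, -5, -2, 6], [-6,
    2, 4], [-1, 5], [2]],
  [[0, 0, 0, 0, -1, -4, 3], [0, 0, 0, -1, -3, -2], [0, 0, 2, -8,
    -3], [0, -7, 4, -6], [8, 1, -8], [5, -6], [4]],
  [[0, 0, 0, 2, -2, -3], [0, 0, 9, -8,
    5], [0, -5, -6, 2], [8, -3], [3, -9], [6]],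
  [[0, 0, -9, 2, 9], [0, 0, 1, -6], [0, -6,
    -6], [-3, 9], [-5]],
  [[0, 0, 0, 8], [0, -1, 4], [9, 3], [4]],
  [[0, 3, -8], [2, 3],
    [-5]],
  [[-5], [-5]],
  [[-1]]]

theorem cert_check :
    (add3 (add3 (mul3 certL0 gradL0) (mul3 certL1 gradL1))
      (add3 (add3 (mul3 certL2 gradL2) (mul3 certL3 gradL3)) [[[-1]]])).all
      (fun m => m.all (fun k => k.all (fun n => Int.emod n 19 == 0))) = true := by
  decide +kernel

set_option linter.unusedSimpArgs false

/-! ### The polynomials as functions on a commutative ring -/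

section
variable {R : Type} [CommRing R]

def fS (a b c d : R) : R := a * b - c * d
def fR (a b c d : R) : R := a ^ 2 + b ^ 2 + c ^ 2 + d ^ 2
def fR1 (a b c d : R) : R := a + 2 * c + 3 * d + 4 * b
def fP (a b c d : R) : R :=
  b * (4 * a - 2 * c - 2 * d + b) * (a - 2 * c - 2 * d + 4 * b) * (a + c + d + b) * (a - c - d + b)
def fQ (a b c d : R) : R := fP a b c d + fR1 a b c d * fS a b c d * fR a b c d

/-- Derivative of the product of linear forms, when the factors have derivatives `e2, …, e6`. -/
def fdP (e2 e3 e4 e5 e6 a b c d : R) : R :=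
  e2 * (4 * a - 2 * c - 2 * d + b) * (a - 2 * c - 2 * d + 4 * b) * (a + c + d + b) * (a - c - d + b)
  + b * e3 * (a - 2 * c - 2 * d + 4 * b) * (a + c + d + b) * (a - c - d + b)
  + b * (4 * a - 2 * c - 2 * d + b) * e4 * (a + c + d + b) * (a - c - d + b)
  + b * (4 * a - 2 * c - 2 * d + b) * (a - 2 * c - 2 * d + 4 * b) * e5 * (a - c - d + b)
  + b * (4 * a - 2 * c - 2 * d + b) * (a - 2 * c - 2 * d + 4 * b) * (a + c + d + b) * e6

def q0 (a b c d : R) : R := fdP 0 4 1 1 1 a b c d + fS a b c d * fR a b c d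
  + fR1 a b c d * b * fR a b c d + fR1 a b c d * fS a b c d * (2 * a)
def q1 (a b c d : R) : R := fdP 1 1 4 1 1 a b c d + 4 * fS a b c d * fR a b c d
  + fR1 a b c d * a * fR a b c d + fR1 a b c d * fS a b c d * (2 * b)
def q2 (a b c d : R) : R := fdP 0 (-2) (-2) 1 (-1) a b c d + 2 * fS a b c d * fR a b c d
  - fR1 a b c d * d * fR a b c d + fR1 a b c d * fS a b c d * (2 * c)
def q3 (a b c d : R) : R := fdP 0 (-2) (-2) 1 (-1) a b c d + 3 * fS a b c d * fR a b c d
  - fR1 a b c d * c * fR a b c d + fR1 a b c d * fS a b c d * (2 * d)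

def g0 (a b c d : R) : R := fQ a b c d + a * q0 a b c d - 3 * fS a b c d ^ 2 * b
def g1 (a b c d : R) : R := a * q1 a b c d - 3 * fS a b c d ^ 2 * a
def g2 (a b c d : R) : R := a * q2 a b c d + 3 * fS a b c d ^ 2 * d
def g3 (a b c d : R) : R := a * q3 a b c d + 3 * fS a b c d ^ 2 * c

theorem g0_smul (t a b c d : R) : g0 (t * a) (t * b) (t * c) (t * d) = t ^ 5 * g0 a b c d := by
  simp only [g0, q0, fQ, fP, fdP, fS, fR, fR1]; ring
theorem g1_smul (t a b c d : R) : g1 (t * a) (t * b) (t * c) (t * d) = t ^ 5 * g1 a b c d := by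
  simp only [g1, q1, fQ, fP, fdP, fS, fR, fR1]; ring
theorem g2_smul (t a b c d : R) : g2 (t * a) (t * b) (t * c) (t * d) = t ^ 5 * g2 a b c d := by
  simp only [g2, q2, fQ, fP, fdP, fS, fR, fR1]; ring
theorem g3_smul (t a b c d : R) : g3 (t * a) (t * b) (t * c) (t * d) = t ^ 5 * g3 a b c d := by
  simp only [g3, q3, fQ, fP, fdP, fS, fR, fR1]; ring

theorem gradL0_ev (b c d : R) : ev3 b c d gradL0 = g0 1 b c d := by
  simp only [ev3, gradL0, listEv, g0, q0, fQ, fP, fdP, fS, fR, fR1]; push_cast; ring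
theorem gradL1_ev (b c d : R) : ev3 b c d gradL1 = g1 1 b c d := by
  simp only [ev3, gradL1, listEv, g1, q1, fQ, fP, fdP, fS, fR, fR1]; push_cast; ring
theorem gradL2_ev (b c d : R) : ev3 b c d gradL2 = g2 1 b c d := by
  simp only [ev3, gradL2, listEv, g2, q2, fQ, fP, fdP, fS, fR, fR1]; push_cast; ring
theorem gradL3_ev (b c d : R) : ev3 b c d gradL3 = g3 1 b c d := by
  simp only [ev3, gradL3, listEv, g3, q3, fQ, fP, fdP, fS, fR, fR1]; push_cast; ring

/-- No common zero of the partial derivatives with `y₀ = 1` in characteristic 19. -/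
theorem one_eq_zero_of_char (h19 : (19 : R) = 0) (b c d : R) (h0 : g0 1 b c d = 0)
    (h1 : g1 1 b c d = 0) (h2 : g2 1 b c d = 0) (h3 : g3 1 b c d = 0) : (1 : R) = 0 := by
  have h := ev3_all b c d h19 _ cert_check
  simp only [ev3_add, ev3_mul, gradL0_ev, gradL1_ev, gradL2_ev, gradL3_ev, h0, h1, h2, h3] at h
  simp [ev3, listEv] at h
  exact h

variable {R' : Type} [CommRing R'] (φ : R →+* R')

theorem g0_map (a b c d : R) : φ (g0 a b c d) = g0 (φ a) (φ b) (φ c) (φ d) := by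
  simp [g0, q0, fQ, fP, fdP, fS, fR, fR1, map_ofNat φ 2, map_ofNat φ 3, map_ofNat φ 4]
theorem g1_map (a b c d : R) : φ (g1 a b c d) = g1 (φ a) (φ b) (φ c) (φ d) := by
  simp [g1, q1, fQ, fP, fdP, fS, fR, fR1, map_ofNat φ 2, map_ofNat φ 3, map_ofNat φ 4]
theorem g2_map (a b c d : R) : φ (g2 a b c d) = g2 (φ a) (φ b) (φ c) (φ d) := by
  simp [g2, q2, fQ, fP, fdP, fS, fR, fR1, map_ofNat φ 2, map_ofNat φ 3, map_ofNat φ 4]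
theorem g3_map (a b c d : R) : φ (g3 a b c d) = g3 (φ a) (φ b) (φ c) (φ d) := by
  simp [g3, q3, fQ, fP, fdP, fS, fR, fR1, map_ofNat φ 2, map_ofNat φ 3, map_ofNat φ 4]
theorem q1_map (a b c d : R) : φ (q1 a b c d) = q1 (φ a) (φ b) (φ c) (φ d) := by
  simp [q1, fdP, fS, fR, fR1, map_ofNat φ 2, map_ofNat φ 3, map_ofNat φ 4]
end

section
variable {K : Type} [Field K]

/-- With `y₀ = 0`, a common zero of the partial derivatives lies on `S = Q = 0`. -/
theorem S_Q_zero (h3ne : (3 : K) ≠ 0) (b c d : K) (h0 : g0 0 b c d = 0)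
    (h2 : g2 0 b c d = 0) : fS 0 b c d = 0 ∧ fQ 0 b c d = 0 := by
  have hS : fS 0 b c d = 0 := by
    by_contra hne
    have hd : d = 0 := by
      simp only [g2, zero_mul, zero_add] at h2
      simpa [h3ne, hne] using h2
    exact hne (by simp [fS, hd])
  refine ⟨hS, ?_⟩
  simpa [g0, hS] using h0

theorem char19_ne (h19 : (19 : K) = 0) (n m k : ℤ) (h : n * m + 19 * k = 1) : (n : K) ≠ 0 := by
  intro hn
  have := congrArg (Int.cast : ℤ → K) h
  push_cast at this
  rw [hn, h19] at this
  simp at this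

/-- The quintic form on the two lines of `y₀ = S = 0`, in factored form, has only simple roots. -/
theorem quintic_simple (h19 : (19 : K) = 0) (b d : K) (hd : d ≠ 0)
    (hQ : b * (b - 2 * d) * (4 * b - 2 * d) * (b + d) * (b - d) = 0) :
    (b - 2 * d) * (4 * b - 2 * d) * (b + d) * (b - d) + b * (4 * b - 2 * d) * (b + d) * (b - d)
      + 4 * b * (b - 2 * d) * (b + d) * (b - d) + b * (b - 2 * d) * (4 * b - 2 * d) * (b - d)
      + b * (b - 2 * d) * (4 * b - 2 * d) * (b + d) ≠ 0 := by
  have hd4 : d ^ 4 ≠ 0 := pow_ne_zero _ hd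
  have e2 : ((2 : ℤ) : K) ≠ 0 := char19_ne h19 2 (-9) 1 (by norm_num)
  have e3 : ((3 : ℤ) : K) ≠ 0 := char19_ne h19 3 (-6) 1 (by norm_num)
  push_cast at e2 e3
  simp only [mul_eq_zero] at hQ
  rcases hQ with (((h | h) | h) | h) | h
  · subst h
    intro h
    apply mul_ne_zero (pow_ne_zero 2 e2) hd4
    linear_combination -h
  · obtain rfl : b = 2 * d := by linear_combination h
    intro h
    apply mul_ne_zero (mul_ne_zero (pow_ne_zero 2 e2) (pow_ne_zero 2 e3)) hd4
    linear_combination h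
  · obtain rfl : d = 2 * b := by
      apply mul_left_cancel₀ e2
      linear_combination -h
    have hb4 : b ^ 4 ≠ 0 := pow_ne_zero 4 (by rintro rfl; simp at hd)
    intro h
    apply mul_ne_zero (mul_ne_zero (pow_ne_zero 2 e2) (pow_ne_zero 2 e3)) hb4
    linear_combination h
  · obtain rfl : b = -d := by linear_combination h
    intro h
    apply mul_ne_zero (mul_ne_zero (pow_ne_zero 2 e2) (pow_ne_zero 2 e3)) hd4
    linear_combination h
  · obtain rfl : b = d := by linear_combination h
    intro h
    apply mul_ne_zero (pow_ne_zero 2 e2) hd4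
    linear_combination -h

/-- In characteristic 19: a singular point has `y₀ = 0` and one of two minors is nonzero. -/
theorem residue_case (h19 : (19 : K) = 0) (a b c d : K) (hne : a ≠ 0 ∨ b ≠ 0 ∨ c ≠ 0 ∨ d ≠ 0)
    (h0 : g0 a b c d = 0) (h1 : g1 a b c d = 0) (h2 : g2 a b c d = 0) (h3 : g3 a b c d = 0) :
    a = 0 ∧ (d * q1 a b c d ≠ 0 ∨ c * q1 a b c d ≠ 0) := by
  have ha : a = 0 := by
    by_contra ha
    refine one_ne_zero (α := K) (one_eq_zero_of_char h19 (a⁻¹ * b) (a⁻¹ * c) (a⁻¹ * d) ?_ ?_ ?_ ?_)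
    · have := g0_smul a⁻¹ a b c d
      rwa [h0, mul_zero, inv_mul_cancel₀ ha] at this
    · have := g1_smul a⁻¹ a b c d
      rwa [h1, mul_zero, inv_mul_cancel₀ ha] at this
    · have := g2_smul a⁻¹ a b c d
      rwa [h2, mul_zero, inv_mul_cancel₀ ha] at this
    · have := g3_smul a⁻¹ a b c d
      rwa [h3, mul_zero, inv_mul_cancel₀ ha] at this
  subst ha
  refine ⟨rfl, ?_⟩
  have e2 : ((2 : ℤ) : K) ≠ 0 := char19_ne h19 2 (-9) 1 (by norm_num)
  have e3 : ((3 : ℤ) : K) ≠ 0 := char19_ne h19 3 (-6) 1 (by norm_num)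
  push_cast at e2 e3
  obtain ⟨hS, hQ⟩ := S_Q_zero e3 b c d h0 h2
  have hQ' : fP 0 b c d = 0 := by simpa [fQ, hS] using hQ
  have hcd : c = 0 ∨ d = 0 := by simpa [fS] using hS
  rcases hcd with rfl | rfl
  · by_cases hd : d = 0
    · subst hd
      exfalso
      have hb : (2 * b) ^ 2 * b ^ 3 = 0 := by
        rw [← hQ']; simp only [fP]; ring
      have : b = 0 := by simpa [e2] using hb
      simp [this] at hne
    · left
      refine mul_ne_zero hd ?_
      have := quintic_simple h19 b d hd (by rw [← hQ']; simp only [fP]; ring)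
      intro h
      apply this
      rw [← h]
      simp only [q1, hS, fdP]; ring
  · by_cases hc : c = 0
    · subst hc
      exfalso
      have hb : (2 * b) ^ 2 * b ^ 3 = 0 := by
        rw [← hQ']; simp only [fP]; ring
      have : b = 0 := by simpa [e2] using hb
      simp [this] at hne
    · right
      refine mul_ne_zero hc ?_
      have := quintic_simple h19 b c hc (by rw [← hQ']; simp only [fP]; ring)
      intro h
      apply this
      rw [← h]
      simp only [q1, hS, fdP]; ring

end

/-- A local domain version. -/
theorem local_case {B : Type} [CommRing B] [IsDomain B] {K : Type} [Field K] (φ : B →+* K)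
    (h19 : (19 : K) = 0) (a b c d : B) (hne : φ a ≠ 0 ∨ φ b ≠ 0 ∨ φ c ≠ 0 ∨ φ d ≠ 0)
    (h0 : g0 a b c d = 0) (h1 : g1 a b c d = 0) (h2 : g2 a b c d = 0) (h3 : g3 a b c d = 0) :
    a = 0 := by
  obtain ⟨ha, hh⟩ := residue_case h19 (φ a) (φ b) (φ c) (φ d) hne
    (by rw [← g0_map, h0, map_zero]) (by rw [← g1_map, h1, map_zero])
    (by rw [← g2_map, h2, map_zero]) (by rw [← g3_map, h3, map_zero])
  rcases hh with hh | hh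
  · have key : a * (d * q1 a b c d + a * q2 a b c d) = 0 := by
      have : a * (d * q1 a b c d + a * q2 a b c d) = d * g1 a b c d + a * g2 a b c d := by
        simp only [g1, g2]; ring
      rw [this, h1, h2]; ring
    rcases mul_eq_zero.mp key with h | h
    · exact h
    · exfalso
      apply hh
      have := congrArg φ h
      rwa [map_add, map_mul, map_mul, ha, zero_mul, add_zero, q1_map, map_zero] at this
  · have key : a * (c * q1 a b c d + a * q3 a b c d) = 0 := by
      have : a * (c * q1 a b c d + a * q3 a b c d) = c * g1 a b c d + a * g3 a b c d := by
        simp only [g1, g3]; ring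
      rw [this, h1, h3]; ring
    rcases mul_eq_zero.mp key with h | h
    · exact h
    · exfalso
      apply hh
      have := congrArg φ h
      rwa [map_add, map_mul, map_mul, ha, zero_mul, add_zero, q1_map, map_zero] at this

/-- There is a valuation ring of `ℂ` in which 19 is not invertible. -/
theorem exists_val : ∃ B : ValuationSubring ℂ, (19 : ℂ) ∈ B.nonunits := by
  let f : ℤ →+* ℂ := Int.castRingHom ℂ
  let A : Subring ℂ := f.range
  let t : A := ⟨19, ⟨19, by simp [f]⟩⟩
  have hI : Ideal.span {t} ≠ ⊤ := by
    intro h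
    rw [Ideal.span_singleton_eq_top] at h
    obtain ⟨⟨w, ⟨n, hn⟩⟩, hw⟩ := h.exists_right_inv
    have h2 : (19 : ℂ) * w = 1 := congrArg Subtype.val hw
    rw [← hn] at h2
    have h3 : (19 : ℤ) * n = 1 := by
      have : (19 : ℂ) * (n : ℂ) = 1 := by simpa [f] using h2
      exact_mod_cast this
    omega
  obtain ⟨B, hB, hB2⟩ := Ideal.image_subset_nonunits_valuationSubring (Ideal.span {t}) hI
  exact ⟨B, hB2 ⟨t, Ideal.mem_span_singleton_self t, rfl⟩⟩

/-- Every nonzero vector can be scaled into a valuation ring with some coordinate 1. -/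
theorem exists_scale (B : ValuationSubring ℂ) (x : Fin 4 → ℂ) (hx : x ≠ 0) :
    ∃ t : ℂ, t ≠ 0 ∧ (∀ i, t * x i ∈ B) ∧ ∃ j, t * x j = 1 := by
  obtain ⟨j, hj⟩ := Finite.exists_max (fun i => B.valuation (x i))
  have hj0 : x j ≠ 0 := by
    intro h
    apply hx
    funext i
    have := hj i
    simp only [h, map_zero] at this
    simpa using this
  refine ⟨(x j)⁻¹, inv_ne_zero hj0, fun i => ?_, j, inv_mul_cancel₀ hj0⟩
  rw [← B.valuation_le_one_iff, map_mul, map_inv₀]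
  have hv : B.valuation (x j) ≠ 0 := by simpa using hj0
  calc (B.valuation (x j))⁻¹ * B.valuation (x i)
      ≤ (B.valuation (x j))⁻¹ * B.valuation (x j) := by gcongr; exact hj i
    _ = 1 := inv_mul_cancel₀ hv

theorem x0_eq_zero (x : Fin 4 → ℂ) (hx : x ≠ 0)
    (h0 : g0 (x 0) (x 1) (x 2) (x 3) = 0) (h1 : g1 (x 0) (x 1) (x 2) (x 3) = 0)
    (h2 : g2 (x 0) (x 1) (x 2) (x 3) = 0) (h3 : g3 (x 0) (x 1) (x 2) (x 3) = 0) : x 0 = 0 := by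
  obtain ⟨B, hB⟩ := exists_val
  obtain ⟨t, ht, hmem, j, hj⟩ := exists_scale B x hx
  let z : Fin 4 → B := fun i => ⟨t * x i, hmem i⟩
  have hinj : Function.Injective B.subtype := Subtype.val_injective
  have hz : z 0 = 0 := by
    refine local_case (IsLocalRing.residue B) ?_ (z 0) (z 1) (z 2) (z 3) ?_ ?_ ?_ ?_ ?_
    · have h19 : (19 : B) ∈ IsLocalRing.maximalIdeal B := by
        rw [IsLocalRing.mem_maximalIdeal]
        obtain ⟨h, hh⟩ := ValuationSubring.mem_nonunits_iff_exists_mem_maximalIdeal.mp hB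
        exact hh
      have := (IsLocalRing.residue_eq_zero_iff (19 : B)).mpr h19
      rwa [map_ofNat (IsLocalRing.residue B) 19] at this
    · have hzj : z j = 1 := Subtype.ext hj
      have : IsLocalRing.residue B (z j) ≠ 0 := by rw [hzj, map_one]; exact one_ne_zero
      fin_cases j
      · exact Or.inl this
      · exact Or.inr (Or.inl this)
      · exact Or.inr (Or.inr (Or.inl this))
      · exact Or.inr (Or.inr (Or.inr this))
    · apply hinj
      rw [g0_map, map_zero]
      exact (g0_smul t _ _ _ _).trans (by rw [h0, mul_zero])
    · apply hinj
      rw [g1_map, map_zero]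
      exact (g1_smul t _ _ _ _).trans (by rw [h1, mul_zero])
    · apply hinj
      rw [g2_map, map_zero]
      exact (g2_smul t _ _ _ _).trans (by rw [h2, mul_zero])
    · apply hinj
      rw [g3_map, map_zero]
      exact (g3_smul t _ _ _ _).trans (by rw [h3, mul_zero])
  have : t * x 0 = 0 := congrArg Subtype.val hz
  simpa [ht] using this

/-! ### The connection with the polynomials -/

theorem eval_F0 (x : Fin 4 → ℂ) : eval x (polyF 0) = x 0 := by simp [polyF]
theorem eval_S (x : Fin 4 → ℂ) : eval x polyS = fS (x 0) (x 1) (x 2) (x 3) := by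
  simp [polyS, fS]
theorem eval_Q (x : Fin 4 → ℂ) : eval x polyS23456 = fQ (x 0) (x 1) (x 2) (x 3) := by
  simp [polyS23456, polyF, polyS, polyR, polyR1, fQ, fP, fS, fR, fR1]

theorem pd_num2 (i : Fin 4) : pderiv i (2 : MvPolynomial (Fin 4) ℂ) = 0 :=
  Derivation.map_natCast _ 2
theorem pd_num3 (i : Fin 4) : pderiv i (3 : MvPolynomial (Fin 4) ℂ) = 0 :=
  Derivation.map_natCast _ 3
theorem pd_num4 (i : Fin 4) : pderiv i (4 : MvPolynomial (Fin 4) ℂ) = 0 :=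
  Derivation.map_natCast _ 4

theorem eval_g0 (x : Fin 4 → ℂ) :
    eval x (pderiv 0 polySextic8) = g0 (x 0) (x 1) (x 2) (x 3) := by
  simp [polySextic8, polyS23456, polyF, polyS, polyR, polyR1, pderiv_X, pd_num2, pd_num3, pd_num4, Pi.single_apply,
    Derivation.leibniz, Derivation.leibniz_pow, g0, q0, fQ, fdP, fP, fS, fR, fR1]
  ring
theorem eval_g1 (x : Fin 4 → ℂ) :
    eval x (pderiv 1 polySextic8) = g1 (x 0) (x 1) (x 2) (x 3) := by
  simp [polySextic8, polyS23456, polyF, polyS, polyR, polyR1, pderiv_X, pd_num2, pd_num3, pd_num4, Pi.single_apply,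
    Derivation.leibniz, Derivation.leibniz_pow, g1, q1, fQ, fdP, fP, fS, fR, fR1]
  ring
theorem eval_g2 (x : Fin 4 → ℂ) :
    eval x (pderiv 2 polySextic8) = g2 (x 0) (x 1) (x 2) (x 3) := by
  simp [polySextic8, polyS23456, polyF, polyS, polyR, polyR1, pderiv_X, pd_num2, pd_num3, pd_num4, Pi.single_apply,
    Derivation.leibniz, Derivation.leibniz_pow, g2, q2, fQ, fdP, fP, fS, fR, fR1]
  ring
theorem eval_g3 (x : Fin 4 → ℂ) :
    eval x (pderiv 3 polySextic8) = g3 (x 0) (x 1) (x 2) (x 3) := by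
  simp [polySextic8, polyS23456, polyF, polyS, polyR, polyR1, pderiv_X, pd_num2, pd_num3, pd_num4, Pi.single_apply,
    Derivation.leibniz, Derivation.leibniz_pow, g3, q3, fQ, fdP, fP, fS, fR, fR1]
  ring

theorem sing_iff (x : Fin 4 → ℂ) (hx : x ≠ 0) :
    (∀ i : Fin 4, eval x (pderiv i polySextic8) = 0) ↔
      (eval x (polyF 0) = 0 ∧ eval x polyS23456 = 0 ∧ eval x polyS = 0) := by
  rw [eval_F0, eval_Q, eval_S]
  constructor
  · intro h
    have h0 := h 0
    have h1 := h 1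
    have h2 := h 2
    have h3 := h 3
    rw [eval_g0] at h0
    rw [eval_g1] at h1
    rw [eval_g2] at h2
    rw [eval_g3] at h3
    have hx0 := x0_eq_zero x hx h0 h1 h2 h3
    rw [hx0] at h0 h2 h3 ⊢
    obtain ⟨hS, hQ⟩ := S_Q_zero (by norm_num) _ _ _ h0 h2
    exact ⟨rfl, hQ, hS⟩
  · rintro ⟨h0, hQ, hS⟩
    have e0 : eval x (pderiv 0 polySextic8) = 0 := by
      rw [eval_g0, g0, hQ, hS, h0]; ring
    have e1 : eval x (pderiv 1 polySextic8) = 0 := by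
      rw [eval_g1, g1, hS, h0]; ring
    have e2 : eval x (pderiv 2 polySextic8) = 0 := by
      rw [eval_g2, g2, hS, h0]; ring
    have e3 : eval x (pderiv 3 polySextic8) = 0 := by
      rw [eval_g3, g3, hS, h0]; ring
    intro i
    fin_cases i
    · exact e0
    · exact e1
    · exact e2
    · exact e3

/-! ### The ten points -/

/-- The five values of `y₁`. -/
noncomputable def rootVal : Fin 5 → ℂ := ![0, 2, 1 / 2, -1, 1]

theorem rootVal_inj : Function.Injective rootVal := by
  intro i j h
  fin_cases i <;> fin_cases j <;> first | rfl | (exfalso; norm_num [rootVal] at h)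

theorem rootVal_cover (b d : ℂ) (hd : d ≠ 0)
    (hQ : b * (b - 2 * d) * (4 * b - 2 * d) * (b + d) * (b - d) = 0) :
    ∃ i, b = d * rootVal i := by
  simp only [mul_eq_zero] at hQ
  rcases hQ with (((h | h) | h) | h) | h
  · exact ⟨0, by simp [rootVal, h]⟩
  · exact ⟨1, by simp [rootVal]; linear_combination h⟩
  · exact ⟨2, by simp [rootVal]; linear_combination h / 4⟩
  · exact ⟨3, by simp [rootVal]; linear_combination h⟩
  · exact ⟨4, by simp [rootVal]; linear_combination h⟩

theorem rootVal_root (i : Fin 5) : rootVal i * (rootVal i - 2) * (4 * rootVal i - 2)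
    * (rootVal i + 1) * (rootVal i - 1) = 0 := by
  fin_cases i <;> norm_num [rootVal]

/-- Representatives of the ten points. -/
noncomputable def ptVec : Fin 2 × Fin 5 → (Fin 4 → ℂ)
  | (0, i) => ![0, rootVal i, 1, 0]
  | (1, i) => ![0, rootVal i, 0, 1]

theorem ptVec_ne (p : Fin 2 × Fin 5) : ptVec p ≠ 0 := by
  obtain ⟨e, i⟩ := p
  intro h
  fin_cases e
  · have := congrFun h 2
    simp [ptVec] at this
  · have := congrFun h 3
    simp [ptVec] at this

noncomputable def pt (p : Fin 2 × Fin 5) : Projectivization ℂ (Fin 4 → ℂ) :=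
  Projectivization.mk ℂ (ptVec p) (ptVec_ne p)

theorem pt_inj : Function.Injective pt := by
  rintro ⟨e, i⟩ ⟨e', i'⟩ h
  rw [pt, pt, Projectivization.mk_eq_mk_iff'] at h
  obtain ⟨a, ha⟩ := h
  have h1 := congrFun ha 1
  have h2 := congrFun ha 2
  have h3 := congrFun ha 3
  fin_cases e <;> fin_cases e' <;> simp [ptVec] at h1 h2 h3
  · subst h2
    simp at h1
    rw [rootVal_inj h1]
  · subst h3
    simp at h1
    rw [rootVal_inj h1]

theorem range_pt : {p : Projectivization ℂ (Fin 4 → ℂ) |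
          ∃ (x : Fin 4 → ℂ) (hx : x ≠ 0), Projectivization.mk ℂ x hx = p ∧
            eval x (polyF 0) = 0 ∧ eval x polyS23456 = 0 ∧ eval x polyS = 0} = Set.range pt := by
  ext p
  simp only [Set.mem_setOf_eq, Set.mem_range]
  constructor
  · rintro ⟨x, hx, rfl, h0, hQ, hS⟩
    rw [eval_F0] at h0
    rw [eval_Q, h0] at hQ
    rw [eval_S, h0] at hS
    have hP : fP 0 (x 1) (x 2) (x 3) = 0 := by simpa [fQ, hS] using hQ
    have hcd : x 2 = 0 ∨ x 3 = 0 := by simpa [fS] using hS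
    by_cases h2 : x 2 = 0
    · by_cases h3 : x 3 = 0
      · exfalso
        have h1 : x 1 = 0 := by
          have : 4 * x 1 ^ 5 = 0 := by rw [← hP, h2, h3]; simp only [fP]; ring
          simpa using this
        apply hx
        funext i
        fin_cases i
        · exact h0
        · exact h1
        · exact h2
        · exact h3
      · obtain ⟨i, hi⟩ := rootVal_cover (x 1) (x 3) h3 (by
          rw [← hP, h2]; simp only [fP]; ring)
        refine ⟨(1, i), ?_⟩
        rw [pt, Projectivization.mk_eq_mk_iff']
        refine ⟨(x 3)⁻¹, ?_⟩
        funext k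
        fin_cases k <;> simp [ptVec, h0, h2, hi, h3]
    · have h3 : x 3 = 0 := hcd.resolve_left h2
      obtain ⟨i, hi⟩ := rootVal_cover (x 1) (x 2) h2 (by
        rw [← hP, h3]; simp only [fP]; ring)
      refine ⟨(0, i), ?_⟩
      rw [pt, Projectivization.mk_eq_mk_iff']
      refine ⟨(x 2)⁻¹, ?_⟩
      funext k
      fin_cases k <;> simp [ptVec, h0, h2, hi, h3]
  · rintro ⟨⟨e, i⟩, rfl⟩
    refine ⟨ptVec (e, i), ptVec_ne _, rfl, ?_⟩
    rw [eval_F0, eval_Q, eval_S]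
    have hr := rootVal_root i
    fin_cases e
    · have hS : fS (0 : ℂ) (rootVal i) 1 0 = 0 := by simp [fS]
      have hQ : fQ (0 : ℂ) (rootVal i) 1 0 = 0 := by
        rw [fQ, hS]; simp only [fP]; linear_combination hr
      exact ⟨rfl, hQ, hS⟩
    · have hS : fS (0 : ℂ) (rootVal i) 0 1 = 0 := by simp [fS]
      have hQ : fQ (0 : ℂ) (rootVal i) 0 1 = 0 := by
        rw [fQ, hS]; simp only [fP]; linear_combination hr
      exact ⟨rfl, hQ, hS⟩

/-- The singular locus of the sextic `F₁·S₂,₃,₄,₅,₆ − S³ = 0` in `ℙ³(ℂ)` is exactly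
the set `{F₁ = S₂,₃,₄,₅,₆ = S = 0}`, which consists of exactly `10` points. -/
theorem sing_sextic8_eq_and_card :
    {p : Projectivization ℂ (Fin 4 → ℂ) |
        ∃ (x : Fin 4 → ℂ) (hx : x ≠ 0), Projectivization.mk ℂ x hx = p ∧
          ∀ i : Fin 4, eval x (pderiv i polySextic8) = 0}
      = {p : Projectivization ℂ (Fin 4 → ℂ) |
          ∃ (x : Fin 4 → ℂ) (hx : x ≠ 0), Projectivization.mk ℂ x hx = p ∧
            eval x (polyF 0) = 0 ∧ eval x polyS23456 = 0 ∧ eval x polyS = 0} ∧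
    {p : Projectivization ℂ (Fin 4 → ℂ) |
        ∃ (x : Fin 4 → ℂ) (hx : x ≠ 0), Projectivization.mk ℂ x hx = p ∧
          ∀ i : Fin 4, eval x (pderiv i polySextic8) = 0}.ncard = 10 := by
  have hset : {p : Projectivization ℂ (Fin 4 → ℂ) |
        ∃ (x : Fin 4 → ℂ) (hx : x ≠ 0), Projectivization.mk ℂ x hx = p ∧
          ∀ i : Fin 4, eval x (pderiv i polySextic8) = 0}
      = {p : Projectivization ℂ (Fin 4 → ℂ) |
          ∃ (x : Fin 4 → ℂ) (hx : x ≠ 0), Projectivization.mk ℂ x hx = p ∧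
            eval x (polyF 0) = 0 ∧ eval x polyS23456 = 0 ∧ eval x polyS = 0} := by
    ext p
    constructor
    · rintro ⟨x, hx, hp, h⟩
      exact ⟨x, hx, hp, (sing_iff x hx).mp h⟩
    · rintro ⟨x, hx, hp, h⟩
      exact ⟨x, hx, hp, (sing_iff x hx).mpr h⟩
  refine ⟨hset, ?_⟩
  rw [hset, range_pt, ← Set.image_univ, Set.ncard_image_of_injective _ pt_inj, Set.ncard_univ]
  simp
end

section
/- The sextic surface F₁·F₂·F₃·F₄·S₅,₆ − S³ = 0 has exactly 28 singular points in ℙ³(ℂ), and every singular point lies on the quadric S = 0. -/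
open MvPolynomial

/-- The sextic `F₁·F₂·F₃·F₄·S₅,₆ − S³`. -/
noncomputable def polySextic9 : MvPolynomial (Fin 4) ℂ :=
  polyF 0 * polyF 1 * polyF 2 * polyF 3 * polyS56 - polyS ^ 3

namespace Sextic9

section grads
variable {R : Type*} [CommRing R]

/-- value of `S`. -/
def vS (a b c d : R) : R := a * b - c * d
/-- value of `F₃`. -/
def f3 (a b c d : R) : R := 4 * a - 2 * c - 2 * d + b
/-- value of `F₄`. -/
def f4 (a b c d : R) : R := a - 2 * c - 2 * d + 4 * b
/-- value of `F₅`. -/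
def f5 (a b c d : R) : R := a + c + d + b
/-- value of `F₆`. -/
def f6 (a b c d : R) : R := a - c - d + b
/-- value of `S₅₆`. -/
def vQ (a b c d : R) : R := f5 a b c d * f6 a b c d + 2 * vS a b c d

/-- The partial derivatives of the sextic. -/
def gr0 (a b c d : R) : R :=
  (b * f3 a b c d * f4 a b c d + 4 * a * b * f4 a b c d + a * b * f3 a b c d) * vQ a b c d
  + a * b * f3 a b c d * f4 a b c d * (f5 a b c d + f6 a b c d + 2 * b) - 3 * vS a b c d ^ 2 * b
/-- derivative in `y₁`. -/
def gr1 (a b c d : R) : R :=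
  (a * f3 a b c d * f4 a b c d + a * b * f4 a b c d + 4 * a * b * f3 a b c d) * vQ a b c d
  + a * b * f3 a b c d * f4 a b c d * (f5 a b c d + f6 a b c d + 2 * a) - 3 * vS a b c d ^ 2 * a
/-- derivative in `y₂`. -/
def gr2 (a b c d : R) : R :=
  (- 2 * a * b * f4 a b c d - 2 * a * b * f3 a b c d) * vQ a b c d
  + a * b * f3 a b c d * f4 a b c d * (f6 a b c d - f5 a b c d - 2 * d) + 3 * vS a b c d ^ 2 * d
/-- derivative in `y₃`. -/
def gr3 (a b c d : R) : R :=
  (- 2 * a * b * f4 a b c d - 2 * a * b * f3 a b c d) * vQ a b c d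
  + a * b * f3 a b c d * f4 a b c d * (f6 a b c d - f5 a b c d - 2 * c) + 3 * vS a b c d ^ 2 * c

end grads

lemma eval_S (x : Fin 4 → ℂ) : eval x polyS = vS (x 0) (x 1) (x 2) (x 3) := by
  simp [polyS, vS]

lemma sextic_eq : polySextic9 = X 0 * X 1 * (C 4 * X 0 - C 2 * X 2 - C 2 * X 3 + X 1) *
    (X 0 - C 2 * X 2 - C 2 * X 3 + C 4 * X 1) *
    ((X 0 + X 2 + X 3 + X 1) * (X 0 - X 2 - X 3 + X 1) + C 2 * (X 0 * X 1 - X 2 * X 3))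
     - (X 0 * X 1 - X 2 * X 3) ^ 3 := by
  have h2 : (C 2 : MvPolynomial (Fin 4) ℂ) = 2 := rfl
  have h4 : (C 4 : MvPolynomial (Fin 4) ℂ) = 4 := rfl
  rw [h2, h4]
  simp [polySextic9, polyS56, polyF, polyS]

lemma eval_gr (x : Fin 4 → ℂ) :
    (∀ i : Fin 4, eval x (pderiv i polySextic9) = 0) ↔
    gr0 (x 0) (x 1) (x 2) (x 3) = 0 ∧ gr1 (x 0) (x 1) (x 2) (x 3) = 0 ∧
    gr2 (x 0) (x 1) (x 2) (x 3) = 0 ∧ gr3 (x 0) (x 1) (x 2) (x 3) = 0 := by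
  have e0 : eval x (pderiv 0 polySextic9) = gr0 (x 0) (x 1) (x 2) (x 3) := by
    rw [sextic_eq]
    simp [pderiv_X, Derivation.leibniz, Derivation.leibniz_pow, gr0, f3, f4, f5, f6, vQ, vS]
    ring
  have e1 : eval x (pderiv 1 polySextic9) = gr1 (x 0) (x 1) (x 2) (x 3) := by
    rw [sextic_eq]
    simp [pderiv_X, Derivation.leibniz, Derivation.leibniz_pow, gr1, f3, f4, f5, f6, vQ, vS]
    ring
  have e2 : eval x (pderiv 2 polySextic9) = gr2 (x 0) (x 1) (x 2) (x 3) := by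
    rw [sextic_eq]
    simp [pderiv_X, Derivation.leibniz, Derivation.leibniz_pow, gr2, f3, f4, f5, f6, vQ, vS]
    ring
  have e3 : eval x (pderiv 3 polySextic9) = gr3 (x 0) (x 1) (x 2) (x 3) := by
    rw [sextic_eq]
    simp [pderiv_X, Derivation.leibniz, Derivation.leibniz_pow, gr3, f3, f4, f5, f6, vQ, vS]
    ring
  rw [Fin.forall_fin_succ, Fin.forall_fin_succ, Fin.forall_fin_succ, Fin.forall_fin_one]
  rw [← e0, ← e1, ← e2, ← e3]
  rfl

/-! ### No singular points off the quadric -/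

lemma crit_ne (n e r : ℂ) (hn : n ≠ 0)
    (h1 : (n+r^2)*((2*e-5*r)^2+9*n)*(e^2-4*r^2+2*n) = n^3)
    (h2 : 4*(2*e-5*r)*(e^2-4*r^2+2*n)+2*e*((2*e-5*r)^2+9*n)=0)
    (h3 : 2*r*((2*e-5*r)^2+9*n)*(e^2-4*r^2+2*n) + (n+r^2)*(-10*(2*e-5*r))*(e^2-4*r^2+2*n)
      + (n+r^2)*((2*e-5*r)^2+9*n)*(-8*r)=0) : False := by
  obtain ⟨k, rfl⟩ : ∃ k : ℂ, n = k ^ 2 := by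
    obtain ⟨k, hk⟩ := IsAlgClosed.exists_pow_nat_eq n (n := 2) (by norm_num)
    exact ⟨k, hk.symm⟩
  have hk : k ≠ 0 := by rintro rfl; simp at hn
  obtain ⟨e', rfl⟩ : ∃ e', e = k * e' := ⟨e / k, by field_simp⟩
  obtain ⟨r', rfl⟩ : ∃ r', r = k * r' := ⟨r / k, by field_simp⟩
  have h1' : (1+r'^2)*((2*e'-5*r')^2+9)*(e'^2-4*r'^2+2) = 1 := by
    apply mul_left_cancel₀ (pow_ne_zero 6 hk); linear_combination h1
  have h2' : 4*(2*e'-5*r')*(e'^2-4*r'^2+2)+2*e'*((2*e'-5*r')^2+9)=0 := by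
    apply mul_left_cancel₀ (pow_ne_zero 3 hk); linear_combination h2
  have h3' : 2*r'*((2*e'-5*r')^2+9)*(e'^2-4*r'^2+2) + (1+r'^2)*(-10*(2*e'-5*r'))*(e'^2-4*r'^2+2)
      + (1+r'^2)*((2*e'-5*r')^2+9)*(-8*r')=0 := by
    apply mul_left_cancel₀ (pow_ne_zero 5 hk); linear_combination h3
  clear h1 h2 h3
  grind

lemma crit_eq (a r : ℂ) (hn : a^2-r^2 ≠ 0)
    (h2 : 12*a*(5*a-4*r)^2+60*a^2*(5*a-4*r)-4*a*(a^2-r^2)=0)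
    (h3 : -48*a^2*(5*a-4*r)+4*r*(a^2-r^2)=0) : False := by
  grind

lemma crit_w (e u m B : ℂ) (hB : B = e^2-u^2) (hn : B ≠ 0)
    (h2 : 4*u^2-10*u*e+4*e^2+18*m=0)
    (h3 : (8*e-10*u)*B=-36*m*e) (h1: (8*u-10*e)*B=36*m*u) (h4 : -9*32*m^2=27*B^2): False := by
  grind

lemma off_diag (a b r : ℂ) (h0 : gr0 a b r r = 0) (h1 : gr1 a b r r = 0)
    (h2 : gr2 a b r r = 0) : vS a b r r = 0 := by
  by_contra hS
  by_cases hab : a = b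
  · subst hab
    have hn : a^2-r^2 ≠ 0 := by intro h; apply hS; simp only [vS]; linear_combination h
    -- on the line `a = b`
    have E : 6*a^2*(5*a-4*r)^2 - (a^2-r^2)^2 = 0 := by
      apply mul_left_cancel₀ hn
      simp only [gr0, gr1, gr2, f3, f4, f5, f6, vQ, vS] at h0 h1 h2
      linear_combination (a * h0 + a * h1 + 2 * r * h2) / 6
    refine crit_eq a r hn ?_ ?_
    · apply mul_left_cancel₀ hn
      simp only [gr0, gr1, gr2, f3, f4, f5, f6, vQ, vS] at h0 h1 h2
      linear_combination h0 + h1 - 2 * a * E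
    · apply mul_left_cancel₀ hn
      simp only [gr0, gr1, gr2, f3, f4, f5, f6, vQ, vS] at h0 h1 h2
      linear_combination 2 * h2 + 2 * r * E
  · have hab' : a - b ≠ 0 := sub_ne_zero.mpr hab
    obtain ⟨n, hn⟩ : ∃ n, n = a * b - r ^ 2 := ⟨_, rfl⟩
    obtain ⟨e, he⟩ : ∃ e, e = a + b := ⟨_, rfl⟩
    have hn0 : n ≠ 0 := by intro h; apply hS; simp only [vS]; linear_combination h - hn
    simp only [gr0, gr1, gr2, f3, f4, f5, f6, vQ, vS] at h0 h1 h2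
    have hm : ((2*e-5*r)^2+9*n)*(e^2-4*r^2+2*n) + (n+r^2)*9*(e^2-4*r^2+2*n)
        + (n+r^2)*((2*e-5*r)^2+9*n)*2 - 3*n^2 = 0 := by
      apply mul_left_cancel₀ hab'
      subst hn he
      linear_combination h1 - h0
    have hE : (n+r^2)*(4*(2*e-5*r)*(e^2-4*r^2+2*n)+2*e*((2*e-5*r)^2+9*n)) = 0 := by
      have hm' := hm
      subst hn he
      linear_combination h0 - b * hm'
    have hR : 2*r*((2*e-5*r)^2+9*n)*(e^2-4*r^2+2*n) + (n+r^2)*(-10*(2*e-5*r))*(e^2-4*r^2+2*n)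
      + (n+r^2)*((2*e-5*r)^2+9*n)*(-8*r)=0 := by
      have hm' := hm
      subst hn he
      linear_combination 2 * h2 + 2 * r * hm'
    have h6 : (n+r^2)*((2*e-5*r)^2+9*n)*(e^2-4*r^2+2*n) = n^3 := by
      linear_combination (e * hE + r * hR + 2 * n * hm) / 6
    have hnr : n + r ^ 2 ≠ 0 := by
      intro h; rw [h] at h6; apply hn0; simpa using h6.symm
    exact crit_ne n e r hn0 h6 (by simpa [hnr] using hE) hR

lemma off_w (a b c d : ℂ) (hcd : c ≠ d) (h0 : gr0 a b c d = 0) (h1 : gr1 a b c d = 0)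
    (h2 : gr2 a b c d = 0) (h3 : gr3 a b c d = 0) : vS a b c d = 0 := by
  by_contra hS
  have hcd' : c - d ≠ 0 := sub_ne_zero.mpr hcd
  obtain ⟨S, hSd⟩ : ∃ S, S = vS a b c d := ⟨_, rfl⟩
  obtain ⟨u, hu⟩ : ∃ u, u = c + d := ⟨_, rfl⟩
  obtain ⟨e, he⟩ : ∃ e, e = a + b := ⟨_, rfl⟩
  obtain ⟨m, hm⟩ : ∃ m, m = a * b := ⟨_, rfl⟩
  obtain ⟨B, hB⟩ : ∃ B, B = e ^ 2 - u ^ 2 := ⟨_, rfl⟩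
  obtain ⟨K, hK⟩ : ∃ K, K = 4*u^2-10*u*e+4*e^2+9*m := ⟨_, rfl⟩
  rw [← hSd] at hS
  have hA : 2 * (m * K) = 3 * S ^ 2 := by
    apply mul_left_cancel₀ hcd'
    simp only [gr2, gr3, f3, f4, f5, f6, vQ] at h2 h3
    rw [← hSd] at h2 h3
    subst hK hm he hu
    linear_combination h2 - h3
  have hmK : m * K ≠ 0 := by
    intro h; rw [h] at hA; apply hS
    have : S ^ 2 = 0 := by linear_combination -hA / 3
    simpa using this
  have hm0 : m ≠ 0 := left_ne_zero_of_mul hmK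
  have e0 : (b * (K + 9 * m) + m * (8 * e - 10 * u)) * (B + 2 * S) + m * K * (2 * e) = 0 := by
    simp only [gr0, f3, f4, f5, f6, vQ] at h0
    rw [← hSd] at h0
    subst hB hK hm he hu
    linear_combination h0 - b * hA
  have e1 : (a * (K + 9 * m) + m * (8 * e - 10 * u)) * (B + 2 * S) + m * K * (2 * e) = 0 := by
    simp only [gr1, f3, f4, f5, f6, vQ] at h1
    rw [← hSd] at h1
    subst hB hK hm he hu
    linear_combination h1 - a * hA
  have e2 : m * (8 * u - 10 * e) * (B + 2 * S) - m * K * (2 * u) = 0 := by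
    simp only [gr2, f3, f4, f5, f6, vQ] at h2
    rw [← hSd] at h2
    subst hB hK hm he hu
    linear_combination h2 + d * hA
  have hBS : 3 * B + 4 * S = 0 := by
    apply mul_left_cancel₀ hmK
    subst hB hK hm he
    linear_combination (a * e0 + b * e1 + u * e2) / 2
  have hS' : S = - 3 / 4 * B := by linear_combination hBS / 4
  have hB0 : B ≠ 0 := by rintro rfl; apply hS; rw [hS']; simp
  subst hS'
  have hU : (8 * u - 10 * e) * B + 4 * K * u = 0 := by
    apply mul_left_cancel₀ hm0; linear_combination -2 * e2
  have hA' : 32 * (m * K) = 27 * B ^ 2 := by linear_combination 16 * hA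
  by_cases hab : a = b
  · subst hab
    have k1 : K = (5 * a - 2 * u) ^ 2 := by rw [hK, hm, he]; ring
    have k2 : 5 * a - 2 * u ≠ 0 := by
      rintro h; rw [h] at k1; apply hmK; rw [k1]; ring
    have k3 : (a - u) * (4 * a - u) = 0 := by
      apply mul_left_cancel₀ k2
      subst hB he
      rw [k1] at hU
      linear_combination -hU / 4
    have ha : a ≠ 0 := by rintro rfl; apply hm0; rw [hm]; ring
    rw [hB, k1, hm, he] at hA'
    rcases mul_eq_zero.mp k3 with h | h
    · have : u = a := by linear_combination -h
      subst this
      have : u ^ 4 = 0 := by linear_combination hA' / 45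
      exact ha (by simpa using this)
    · have : u = 4 * a := by linear_combination -h
      subst this
      have : a ^ 4 = 0 := by linear_combination -hA' / 3600
      exact ha (by simpa using this)
  · have hab' : a - b ≠ 0 := sub_ne_zero.mpr hab
    have k1 : K = - 9 * m := by
      have : K + 9 * m = 0 := by
        apply mul_left_cancel₀ hab'
        apply mul_left_cancel₀ hB0
        linear_combination 2 * (e0 - e1)
      linear_combination this
    refine crit_w e u m B hB hB0 ?_ ?_ ?_ ?_
    · linear_combination k1 - hK
    · apply mul_left_cancel₀ hm0
      rw [k1] at e0
      linear_combination -2 * e0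
    · rw [k1] at hU
      linear_combination hU
    · rw [k1] at hA'
      linear_combination hA'

lemma off (a b c d : ℂ) (h0 : gr0 a b c d = 0) (h1 : gr1 a b c d = 0)
    (h2 : gr2 a b c d = 0) (h3 : gr3 a b c d = 0) : vS a b c d = 0 := by
  by_cases hcd : c = d
  · subst hcd; exact off_diag a b c h0 h1 h2
  · exact off_w a b c d hcd h0 h1 h2 h3

/-! ### The singular points on the quadric -/

/-- The six parameters on each ruling (`(s₁, s₀)`). -/
def sv1 : Fin 6 → ℤ := ![0, 1, 1, 2, -1, 1]
/-- second coordinate. -/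
def sv0 : Fin 6 → ℤ := ![1, 0, 2, 1, 1, 1]

/-- Admissible pairs. -/
abbrev I : Type := {p : Fin 6 × Fin 6 // p.1 ≠ p.2 ∧ p ≠ (4, 5) ∧ p ≠ (5, 4)}

/-- The integral representative of a singular point. -/
def V (p : I) : Fin 4 → ℤ :=
  ![sv1 p.1.1 * sv1 p.1.2, sv0 p.1.1 * sv0 p.1.2, sv1 p.1.1 * sv0 p.1.2, sv0 p.1.1 * sv1 p.1.2]

lemma card_I : Fintype.card I = 28 := by decide

lemma V_grad : ∀ p : I, gr0 (V p 0) (V p 1) (V p 2) (V p 3) = 0 ∧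
    gr1 (V p 0) (V p 1) (V p 2) (V p 3) = 0 ∧
    gr2 (V p 0) (V p 1) (V p 2) (V p 3) = 0 ∧ gr3 (V p 0) (V p 1) (V p 2) (V p 3) = 0 := by
  decide +kernel

lemma V_inj : ∀ p q : I, (∀ k l, V p k * V q l = V p l * V q k) → p = q := by
  decide +kernel

lemma V_ne : ∀ p : I, ∃ k, V p k ≠ 0 := by
  decide +kernel

/-- complex representative -/
noncomputable def W (p : I) : Fin 4 → ℂ := fun k => (V p k : ℂ)

lemma W_ne (p : I) : W p ≠ 0 := by
  obtain ⟨k, hk⟩ := V_ne p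
  intro h
  apply hk
  have := congrFun h k
  simpa [W] using this

lemma W_grad (p : I) (i : Fin 4) : eval (W p) (pderiv i polySextic9) = 0 := by
  revert i
  rw [eval_gr]
  obtain ⟨h0, h1, h2, h3⟩ := V_grad p
  refine ⟨?_, ?_, ?_, ?_⟩
  · have := congrArg (Int.cast : ℤ → ℂ) h0
    simpa [gr0, f3, f4, f5, f6, vQ, vS, W] using this
  · have := congrArg (Int.cast : ℤ → ℂ) h1
    simpa [gr1, f3, f4, f5, f6, vQ, vS, W] using this
  · have := congrArg (Int.cast : ℤ → ℂ) h2
    simpa [gr2, f3, f4, f5, f6, vQ, vS, W] using this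
  · have := congrArg (Int.cast : ℤ → ℂ) h3
    simpa [gr3, f3, f4, f5, f6, vQ, vS, W] using this

lemma W_inj : Function.Injective (fun p : I => Projectivization.mk ℂ (W p) (W_ne p)) := by
  intro p q h
  apply V_inj
  intro k l
  obtain ⟨t, ht⟩ := (Projectivization.mk_eq_mk_iff' ℂ _ _ (W_ne p) (W_ne q)).mp h
  have hk : t * (V q k : ℂ) = V p k := congrFun ht k
  have hl : t * (V q l : ℂ) = V p l := congrFun ht l
  have : (V p k : ℂ) * V q l = V p l * V q k := by rw [← hk, ← hl]; ring
  exact_mod_cast this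

lemma ruling (s1 s0 : ℂ)
    (h : s1 * s0 * (2 * s1 - s0) * (s1 - 2 * s0) * ((s1 + s0) * (s1 - s0)) = 0) :
    ∃ i : Fin 6, ∃ t : ℂ, s1 = t * sv1 i ∧ s0 = t * sv0 i := by
  simp only [mul_eq_zero] at h
  rcases h with (((h | h) | h) | h) | (h | h)
  · exact ⟨0, s0, by simp [sv1, h], by simp [sv0]⟩
  · exact ⟨1, s1, by simp [sv1], by simp [sv0, h]⟩
  · exact ⟨2, s1, by simp [sv1], by simp [sv0]; linear_combination -h⟩
  · exact ⟨3, s0, by simp [sv1]; linear_combination h, by simp [sv0]⟩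
  · exact ⟨4, s0, by simp [sv1]; linear_combination h, by simp [sv0]⟩
  · exact ⟨5, s0, by simp [sv1]; linear_combination h, by simp [sv0]⟩

lemma on_ruling (i : Fin 6) (t1 t0 : ℂ) (ht : t1 ≠ 0 ∨ t0 ≠ 0)
    (h0 : gr0 (sv1 i * t1) (sv0 i * t0) (sv1 i * t0) (sv0 i * t1) = 0)
    (h1 : gr1 (sv1 i * t1) (sv0 i * t0) (sv1 i * t0) (sv0 i * t1) = 0)
    (h2 : gr2 (sv1 i * t1) (sv0 i * t0) (sv1 i * t0) (sv0 i * t1) = 0)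
    (h3 : gr3 (sv1 i * t1) (sv0 i * t0) (sv1 i * t0) (sv0 i * t1) = 0) :
    ∃ j : Fin 6, (i ≠ j ∧ (i, j) ≠ (4, 5) ∧ (i, j) ≠ (5, 4)) ∧
      ∃ t : ℂ, t1 = t * sv1 j ∧ t0 = t * sv0 j := by
  have key : t1 * t0 * (2 * t1 - t0) * (t1 - 2 * t0) * ((t1 + t0) * (t1 - t0)) = 0 := by
    fin_cases i <;> simp [sv1, sv0, gr0, gr1, gr2, gr3, f3, f4, f5, f6, vQ, vS] at h0 h1 h2 h3 ⊢ <;> grind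
  obtain ⟨j, t, rfl, rfl⟩ := ruling t1 t0 key
  refine ⟨j, ?_, t, rfl, rfl⟩
  have ht0 : t ≠ 0 := by rintro rfl; simp at ht
  by_contra hn
  have hbad : i = j ∨ (i = 4 ∧ j = 5) ∨ (i = 5 ∧ j = 4) := by
    clear * - hn
    revert hn; revert i j; decide
  have ht6 : t ^ 5 ≠ 0 := pow_ne_zero 5 ht0
  apply ht6
  rcases hbad with rfl | ⟨rfl, rfl⟩ | ⟨rfl, rfl⟩
  · fin_cases i <;> simp [sv1, sv0, gr0, gr1, gr2, gr3, f3, f4, f5, f6, vQ, vS] at h0 h1 h2 h3 ⊢ <;> grind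
  · simp [sv1, sv0, gr0, gr1, gr2, gr3, f3, f4, f5, f6, vQ, vS] at h0 h1 h2 h3 ⊢ <;> grind
  · simp [sv1, sv0, gr0, gr1, gr2, gr3, f3, f4, f5, f6, vQ, vS] at h0 h1 h2 h3 ⊢ <;> grind

lemma segre (a b c d : ℂ) (h : vS a b c d = 0) : ∃ s1 s0 t1 t0 : ℂ,
    a = s1 * t1 ∧ b = s0 * t0 ∧ c = s1 * t0 ∧ d = s0 * t1 := by
  simp only [vS] at h
  by_cases hb : b = 0
  · subst hb
    have : c * d = 0 := by linear_combination -h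
    rcases mul_eq_zero.mp this with rfl | rfl
    · exact ⟨a, d, 1, 0, by simp, by simp, by simp, by simp⟩
    · exact ⟨1, 0, a, c, by simp, by simp, by simp, by simp⟩
  · refine ⟨c / b, 1, d, b, ?_, by simp, by field_simp, by simp⟩
    field_simp
    linear_combination h

lemma swap_gr (a b c d : ℂ) : gr0 a b d c = gr0 a b c d ∧ gr1 a b d c = gr1 a b c d ∧
    gr2 a b d c = gr3 a b c d ∧ gr3 a b d c = gr2 a b c d := by
  refine ⟨?_, ?_, ?_, ?_⟩ <;> simp only [gr0, gr1, gr2, gr3, f3, f4, f5, f6, vQ, vS] <;> ring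

lemma classify (x : Fin 4 → ℂ) (hx : x ≠ 0)
    (h : ∀ i : Fin 4, eval x (pderiv i polySextic9) = 0) : ∃ p : I, ∃ t : ℂ, t • W p = x := by
  rw [eval_gr] at h
  obtain ⟨h0, h1, h2, h3⟩ := h
  have hS := off _ _ _ _ h0 h1 h2 h3
  obtain ⟨s1, s0, t1, t0, ha, hb, hc, hd⟩ := segre _ _ _ _ hS
  have hx' : ¬ (x 0 = 0 ∧ x 1 = 0 ∧ x 2 = 0 ∧ x 3 = 0) := by
    rintro ⟨k0, k1, k2, k3⟩
    apply hx; funext i; fin_cases i <;> assumption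
  have prod : (s1 * s0 * (2 * s1 - s0) * (s1 - 2 * s0) * ((s1 + s0) * (s1 - s0))) *
      (t1 * t0 * (2 * t1 - t0) * (t1 - 2 * t0) * ((t1 + t0) * (t1 - t0))) = 0 := by
    rw [ha, hb, hc, hd] at h0 h1 h2 h3
    simp only [gr0, gr1, gr2, gr3, f3, f4, f5, f6, vQ, vS] at h0 h1 h2 h3
    linear_combination (s1 * t1 * h0 + s0 * t0 * h1 + s1 * t0 * h2 + s0 * t1 * h3) / 6
  rcases mul_eq_zero.mp prod with hs | ht
  · obtain ⟨i, t, rfl, rfl⟩ := ruling _ _ hs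
    have ha' : x 0 = sv1 i * (t * t1) := by rw [ha]; ring
    have hb' : x 1 = sv0 i * (t * t0) := by rw [hb]; ring
    have hc' : x 2 = sv1 i * (t * t0) := by rw [hc]; ring
    have hd' : x 3 = sv0 i * (t * t1) := by rw [hd]; ring
    rw [ha', hb', hc', hd'] at h0 h1 h2 h3
    obtain ⟨j, hij, r, hr1, hr0⟩ := on_ruling i (t * t1) (t * t0) (by
      by_contra hcon
      push Not at hcon
      apply hx'
      rw [ha', hb', hc', hd', hcon.1, hcon.2]; simp) h0 h1 h2 h3
    refine ⟨⟨(i, j), hij⟩, r, ?_⟩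
    rw [hr1] at ha' hd'
    rw [hr0] at hb' hc'
    funext k
    fin_cases k
    · simp [W, V, ha']; ring
    · simp [W, V, hb']; ring
    · simp [W, V, hc']; ring
    · simp [W, V, hd']; ring
  · obtain ⟨i, t, rfl, rfl⟩ := ruling _ _ ht
    have ha' : x 0 = sv1 i * (t * s1) := by rw [ha]; ring
    have hb' : x 1 = sv0 i * (t * s0) := by rw [hb]; ring
    have hc' : x 2 = sv0 i * (t * s1) := by rw [hc]; ring
    have hd' : x 3 = sv1 i * (t * s0) := by rw [hd]; ring
    rw [ha', hb', hc', hd'] at h0 h1 h2 h3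
    obtain ⟨w0, w1, w2, w3⟩ := swap_gr (sv1 i * (t * s1)) (sv0 i * (t * s0)) (sv0 i * (t * s1))
      (sv1 i * (t * s0))
    obtain ⟨j, hij, r, hr1, hr0⟩ := on_ruling i (t * s1) (t * s0) (by
      by_contra hcon
      push Not at hcon
      apply hx'
      rw [ha', hb', hc', hd', hcon.1, hcon.2]; simp) (w0.trans h0) (w1.trans h1) (w2.trans h3)
        (w3.trans h2)
    have hji : j ≠ i ∧ (j, i) ≠ (4, 5) ∧ (j, i) ≠ (5, 4) := by
      clear * - hij
      revert hij; revert i j; decide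
    refine ⟨⟨(j, i), hji⟩, r, ?_⟩
    rw [hr1] at ha' hc'
    rw [hr0] at hb' hd'
    funext k
    fin_cases k
    · simp [W, V, ha']; ring
    · simp [W, V, hb']; ring
    · simp [W, V, hc']; ring
    · simp [W, V, hd']; ring

end Sextic9

/-- The sextic `F₁·F₂·F₃·F₄·S₅,₆ − S³ = 0` has exactly `28` singular points in
`ℙ³(ℂ)`, and every singular point lies on the quadric `S = 0`. -/
theorem sing_sextic9_card_and_on_quadric :
    {p : Projectivization ℂ (Fin 4 → ℂ) |
        ∃ (x : Fin 4 → ℂ) (hx : x ≠ 0), Projectivization.mk ℂ x hx = p ∧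
          ∀ i : Fin 4, eval x (pderiv i polySextic9) = 0}.ncard = 28 ∧
    ∀ x : Fin 4 → ℂ, x ≠ 0 → (∀ i : Fin 4, eval x (pderiv i polySextic9) = 0) →
      eval x polyS = 0 := by
  constructor
  · have hset : {p : Projectivization ℂ (Fin 4 → ℂ) |
        ∃ (x : Fin 4 → ℂ) (hx : x ≠ 0), Projectivization.mk ℂ x hx = p ∧
          ∀ i : Fin 4, eval x (pderiv i polySextic9) = 0} =
        Set.range (fun p : Sextic9.I =>
          Projectivization.mk ℂ (Sextic9.W p) (Sextic9.W_ne p)) := by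
      ext P
      constructor
      · rintro ⟨x, hx, rfl, h⟩
        obtain ⟨p, t, ht⟩ := Sextic9.classify x hx h
        refine ⟨p, ?_⟩
        symm
        exact (Projectivization.mk_eq_mk_iff' ℂ _ _ hx (Sextic9.W_ne p)).mpr ⟨t, ht⟩
      · rintro ⟨p, rfl⟩
        exact ⟨Sextic9.W p, Sextic9.W_ne p, rfl, Sextic9.W_grad p⟩
    rw [hset, ← Set.image_univ, Set.ncard_image_of_injective _ Sextic9.W_inj, Set.ncard_univ,
      Nat.card_eq_fintype_card, Sextic9.card_I]
  · intro x _ h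
    rw [Sextic9.eval_gr] at h
    rw [Sextic9.eval_S]
    exact Sextic9.off _ _ _ _ h.1 h.2.1 h.2.2.1 h.2.2.2
end

section
/- The complex vector space of homogeneous polynomials of degree 4 in ℂ[y₀,y₁,y₂,y₃] that vanish at all 27 points (1, 0, a, b), (1, a, 0, b), (1, a, b, 0) with a³ = b³ = −1/3 has dimension 11 (equivalently, these 27 points impose exactly 24 independent linear conditions on the 35-dimensional space of quartic forms). -/
open MvPolynomial

/-- The Fermat cubic `R = y₀³ + y₁³ + y₂³ + y₃³`. -/
noncomputable def fermatR : MvPolynomial (Fin 4) ℂ := X 0 ^ 3 + X 1 ^ 3 + X 2 ^ 3 + X 3 ^ 3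

/-- The cubic `S₁ = y₁³ + R`. -/
noncomputable def fermatS1 : MvPolynomial (Fin 4) ℂ := X 1 ^ 3 + fermatR

/-- The cubic `S₂ = y₂³ + R`. -/
noncomputable def fermatS2 : MvPolynomial (Fin 4) ℂ := X 2 ^ 3 + fermatR

/-- The cubic `S₃ = y₃³ + R`. -/
noncomputable def fermatS3 : MvPolynomial (Fin 4) ℂ := X 3 ^ 3 + fermatR

/-- The cubic `S = y₁·y₂·y₃`. -/
noncomputable def fermatQ : MvPolynomial (Fin 4) ℂ := X 1 * X 2 * X 3
/-- The `27` cusps of the residual sextic, as vectors in `ℂ⁴`. -/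
def fermatCusps : Set (Fin 4 → ℂ) :=
  {x | ∃ a b : ℂ, a ^ 3 = -(1/3) ∧ b ^ 3 = -(1/3) ∧
    (x = ![1, 0, a, b] ∨ x = ![1, a, 0, b] ∨ x = ![1, a, b, 0])}

/-- The space of homogeneous quartic forms vanishing at all `27` cusps. -/
noncomputable def quarticsThroughFermatCusps : Submodule ℂ (MvPolynomial (Fin 4) ℂ) :=
  homogeneousSubmodule (Fin 4) ℂ 4 ⊓
    ⨅ (x : Fin 4 → ℂ) (_ : x ∈ fermatCusps),
      LinearMap.ker (aeval x : MvPolynomial (Fin 4) ℂ →ₐ[ℂ] ℂ).toLinearMap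



lemma sum_expand {M : Type*} [AddCommMonoid M] (f : (Fin 4 → ℕ) → M) :
    ∑ t ∈ Finset.Nat.antidiagonalTuple 4 4, f t = f ![0, 0, 0, 4] + f ![0, 0, 1, 3] + f ![0, 0, 2, 2] + f ![0, 0, 3, 1] + f ![0, 0, 4, 0] + f ![0, 1, 0, 3] + f ![0, 1, 1, 2] + f ![0, 1, 2, 1] + f ![0, 1, 3, 0] + f ![0, 2, 0, 2] + f ![0, 2, 1, 1] + f ![0, 2, 2, 0] + f ![0, 3, 0, 1] + f ![0, 3, 1, 0] + f ![0, 4, 0, 0] + f ![1, 0, 0, 3] + f ![1, 0, 1, 2] + f ![1, 0, 2, 1] + f ![1, 0, 3, 0] + f ![1, 1, 0, 2] + f ![1, 1, 1, 1] + f ![1, 1, 2, 0] + f ![1, 2, 0, 1] + f ![1, 2, 1, 0] + f ![1, 3, 0, 0] + f ![2, 0, 0, 2] + f ![2, 0, 1, 1] + f ![2, 0, 2, 0] + f ![2, 1, 0, 1] + f ![2, 1, 1, 0] + f ![2, 2, 0, 0] + f ![3, 0, 0, 1] + f ![3, 0, 1, 0] + f ![3, 1, 0, 0] + f ![4, 0,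 0, 0] := by
  have h : Finset.Nat.antidiagonalTuple 4 4 = ⟨(([![0, 0, 0, 4], ![0, 0, 1, 3], ![0, 0, 2, 2], ![0, 0, 3, 1], ![0, 0, 4, 0], ![0, 1, 0, 3], ![0, 1, 1, 2], ![0, 1, 2, 1], ![0, 1, 3, 0], ![0, 2, 0, 2], ![0, 2, 1, 1], ![0, 2, 2, 0], ![0, 3, 0, 1], ![0, 3, 1, 0], ![0, 4, 0, 0], ![1, 0, 0, 3], ![1, 0, 1, 2], ![1, 0, 2, 1], ![1, 0, 3, 0], ![1, 1, 0, 2], ![1, 1, 1, 1], ![1, 1, 2, 0], ![1, 2, 0, 1], ![1, 2, 1, 0], ![1, 3, 0, 0], ![2, 0, 0, 2], ![2, 0, 1, 1], ![2, 0, 2, 0], ![2, 1, 0, 1], ![2, 1, 1, 0], ![2, 2, 0, 0], ![3, 0, 0, 1], ![3, 0, 1, 0], ![3, 1, 0, 0], ![4, 0, 0, 0]] : List (Fin 4 → ℕ)) : Multiset (Fin 4 → ℕ)), by decide⟩ := by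
    decide
  rw [h]
  simp only [Finset.sum, Multiset.map_coe, Multiset.sum_coe, List.map_cons, List.map_nil,
    List.sum_cons, List.sum_nil, add_zero, add_assoc]


lemma expand_quartic (P : MvPolynomial (Fin 4) ℂ) (hP : P.IsHomogeneous 4) :
    P = ∑ t ∈ Finset.Nat.antidiagonalTuple 4 4,
      C (coeff (Finsupp.equivFunOnFinite.symm t) P) *
        (X 0 ^ t 0 * X 1 ^ t 1 * X 2 ^ t 2 * X 3 ^ t 3) := by
  have h : ∀ t : Fin 4 → ℕ, C (coeff (Finsupp.equivFunOnFinite.symm t) P) *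
        (X 0 ^ t 0 * X 1 ^ t 1 * X 2 ^ t 2 * X 3 ^ t 3)
        = monomial (Finsupp.equivFunOnFinite.symm t) (coeff (Finsupp.equivFunOnFinite.symm t) P) := by
    intro t
    rw [monomial_eq, Finsupp.prod_fintype _ _ (by simp)]
    simp [Fin.prod_univ_four]
  simp only [h]
  ext d
  rw [coeff_sum]
  simp only [coeff_monomial]
  by_cases hd : d.degree = 4
  · rw [Finset.sum_eq_single (d : Fin 4 → ℕ)]
    · simp
    · intro b _ hb
      rw [if_neg]
      rintro rfl
      exact hb (by simp)
    · intro hh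
      exfalso
      apply hh
      rw [Finset.Nat.mem_antidiagonalTuple]
      rw [Finsupp.degree_eq_sum] at hd
      exact hd
  · rw [hP.coeff_eq_zero hd, Finset.sum_eq_zero]
    intro t ht
    rw [if_neg]
    rintro rfl
    apply hd
    rw [Finset.Nat.mem_antidiagonalTuple] at ht
    rw [Finsupp.degree_eq_sum]
    simpa using ht

lemma exists_roots : ∃ r w : ℂ, r ^ 3 = -(1/3) ∧ w ^ 2 + w + 1 = 0 := by
  obtain ⟨r, hr⟩ := IsAlgClosed.exists_pow_nat_eq (-(1/3) : ℂ) (n := 3) (by norm_num)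
  obtain ⟨s, hs⟩ := IsAlgClosed.exists_pow_nat_eq (-3 : ℂ) (n := 2) (by norm_num)
  exact ⟨r, (s - 1) / 2, hr, by linear_combination hs / 4⟩

lemma quad_zero (u v w : ℂ) (h : ∀ a : ℂ, a ^ 3 = -(1/3) → u + v * a + w * a ^ 2 = 0) :
    u = 0 ∧ v = 0 ∧ w = 0 := by
  obtain ⟨r, z, hr, hz⟩ := exists_roots
  have hr0 : r ≠ 0 := by rintro rfl; norm_num at hr
  have hz3 : z ^ 3 = 1 := by linear_combination (z - 1) * hz
  have h1 := h r hr
  have h2 := h (z * r) (by rw [mul_pow, hz3, hr, one_mul])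
  have h3 := h (z ^ 2 * r) (by rw [mul_pow, ← pow_mul, mul_comm 2 3, pow_mul, hz3, hr]; ring)
  have hu : u = 0 := by
    linear_combination (h1 + h2 + h3) / 3 - (v * r / 3) * hz - (w * r ^ 2 / 3) * (hz + z * hz3)
  have hv : v * r = 0 := by
    linear_combination (h1 + z ^ 2 * h2 + z * h3) / 3 - (u / 3) * hz - (v * r / 3) * (2 * hz3) - (w * r ^ 2 / 3) * (hz + z * hz3 + z ^ 2 * hz3)
  have hv := (mul_eq_zero.mp hv).resolve_right hr0
  subst hu hv
  simp [hr0] at h1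
  exact ⟨rfl, rfl, h1⟩

lemma biquad_zero (g : Fin 3 → Fin 3 → ℂ)
    (h : ∀ a b : ℂ, a ^ 3 = -(1/3) → b ^ 3 = -(1/3) →
      (g 0 0 + g 0 1 * b + g 0 2 * b ^ 2) + (g 1 0 + g 1 1 * b + g 1 2 * b ^ 2) * a
        + (g 2 0 + g 2 1 * b + g 2 2 * b ^ 2) * a ^ 2 = 0) : ∀ i j, g i j = 0 := by
  have h0 := fun b hb => quad_zero _ _ _ (fun a ha => h a b ha hb)
  have e0 := quad_zero _ _ _ (fun b hb => (h0 b hb).1)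
  have e1 := quad_zero _ _ _ (fun b hb => (h0 b hb).2.1)
  have e2 := quad_zero _ _ _ (fun b hb => (h0 b hb).2.2)
  intro i j
  fin_cases i <;> fin_cases j <;> simp [e0, e1, e2]

noncomputable def quarticBasis : Fin 11 → MvPolynomial (Fin 4) ℂ :=
  ![X 0 * X 1 * X 2 * X 3, X 1 ^ 2 * X 2 * X 3, X 1 * X 2 ^ 2 * X 3, X 1 * X 2 * X 3 ^ 2,
    C 2 * X 0 ^ 4 + C 3 * X 0 * X 1 ^ 3 + C 3 * X 0 * X 2 ^ 3 + C 3 * X 0 * X 3 ^ 3,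
    C 3 * X 1 ^ 4 + X 0 ^ 3 * X 1, C 3 * X 2 ^ 4 + X 0 ^ 3 * X 2, C 3 * X 3 ^ 4 + X 0 ^ 3 * X 3,
    C 3 * X 1 * X 2 ^ 3 + C 3 * X 1 * X 3 ^ 3 + X 0 ^ 3 * X 1,
    C 3 * X 2 * X 1 ^ 3 + C 3 * X 2 * X 3 ^ 3 + X 0 ^ 3 * X 2,
    C 3 * X 3 * X 1 ^ 3 + C 3 * X 3 * X 2 ^ 3 + X 0 ^ 3 * X 3]

lemma quarticBasis_hom (i : Fin 11) : (quarticBasis i).IsHomogeneous 4 := by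
  have hX : ∀ j : Fin 4, (X j : MvPolynomial (Fin 4) ℂ).IsHomogeneous 1 := isHomogeneous_X ℂ
  have hC : ∀ c : ℂ, (C c : MvPolynomial (Fin 4) ℂ).IsHomogeneous 0 := isHomogeneous_C (Fin 4)
  have m4 : ∀ a b c d : Fin 4, (X a * X b * X c * X d : MvPolynomial (Fin 4) ℂ).IsHomogeneous 4 :=
    fun a b c d => (((hX a).mul (hX b)).mul (hX c)).mul (hX d)
  have n4 : ∀ (k : ℂ) (a b c d : Fin 4),
      (C k * (X a * X b * X c * X d) : MvPolynomial (Fin 4) ℂ).IsHomogeneous 4 := by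
    intro k a b c d
    simpa using (hC k).mul (m4 a b c d)
  fin_cases i
  · exact m4 0 1 2 3
  · convert m4 1 1 2 3 using 1; simp [quarticBasis]; ring
  · convert m4 1 2 2 3 using 1; simp [quarticBasis]; ring
  · convert m4 1 2 3 3 using 1; simp [quarticBasis]; ring
  · convert (((n4 2 0 0 0 0).add (n4 3 0 1 1 1)).add (n4 3 0 2 2 2)).add (n4 3 0 3 3 3) using 1
    simp [quarticBasis]; ring
  · convert (n4 3 1 1 1 1).add (m4 0 0 0 1) using 1; simp [quarticBasis]; ring
  · convert (n4 3 2 2 2 2).add (m4 0 0 0 2) using 1; simp [quarticBasis]; ring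
  · convert (n4 3 3 3 3 3).add (m4 0 0 0 3) using 1; simp [quarticBasis]; ring
  · convert ((n4 3 1 2 2 2).add (n4 3 1 3 3 3)).add (m4 0 0 0 1) using 1; simp [quarticBasis]; ring
  · convert ((n4 3 2 1 1 1).add (n4 3 2 3 3 3)).add (m4 0 0 0 2) using 1; simp [quarticBasis]; ring
  · convert ((n4 3 3 1 1 1).add (n4 3 3 2 2 2)).add (m4 0 0 0 3) using 1; simp [quarticBasis]; ring

lemma quarticBasis_vanish (i : Fin 11) (x : Fin 4 → ℂ) (hx : x ∈ fermatCusps) :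
    aeval x (quarticBasis i) = 0 := by
  obtain ⟨a, b, ha, hb, rfl | rfl | rfl⟩ := hx <;> fin_cases i <;> simp [quarticBasis] <;> grind

lemma quarticBasis_indep : LinearIndependent ℂ quarticBasis := by
  rw [Fintype.linearIndependent_iff]
  intro g hg
  have ev : ∀ x : Fin 4 → ℂ, aeval x (∑ i, g i • quarticBasis i) = 0 := by
    intro x; rw [hg, map_zero]
  have e1 := ev ![0, 1, 0, 0]
  have e2 := ev ![0, 0, 1, 0]
  have e3 := ev ![0, 0, 0, 1]
  have e4 := ev ![1, 0, 0, 0]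
  have e5 := ev ![0, 1, 1, 0]
  have e6 := ev ![0, 1, 2, 0]
  have e7 := ev ![0, 1, 0, 1]
  have e8 := ev ![1, 1, 1, 1]
  have e9 := ev ![0, 1, 1, 1]
  have e10 := ev ![0, -1, 1, 1]
  have e11 := ev ![0, 1, -1, 1]
  simp [quarticBasis, Fin.sum_univ_succ] at e1 e2 e3 e4 e5 e6 e7 e8 e9 e10 e11
  simp [Fin.forall_fin_succ]
  grind

lemma mem_quartics (P : MvPolynomial (Fin 4) ℂ) : P ∈ quarticsThroughFermatCusps ↔
    P.IsHomogeneous 4 ∧ ∀ x ∈ fermatCusps, aeval x P = 0 := by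
  simp [quarticsThroughFermatCusps, Submodule.mem_iInf]

lemma quartic_mem_span (P : MvPolynomial (Fin 4) ℂ) (hP : P.IsHomogeneous 4)
    (hv : ∀ x ∈ fermatCusps, aeval x P = 0) : P ∈ Submodule.span ℂ (Set.range quarticBasis) := by
  obtain ⟨q, hq⟩ : ∃ q : (Fin 4 → ℕ) → ℂ, P = ∑ t ∈ Finset.Nat.antidiagonalTuple 4 4,
      C (q t) * (X 0 ^ t 0 * X 1 ^ t 1 * X 2 ^ t 2 * X 3 ^ t 3) := ⟨_, expand_quartic P hP⟩
  rw [sum_expand] at hq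
  rw [hq] at hv

  have F1 := biquad_zero (![![-(1/3) * q ![1, 0, 0, 3] + -(1/3) * q ![1, 0, 3, 0] + q ![4, 0, 0, 0],
      -(1/3) * q ![0, 0, 0, 4] + -(1/3) * q ![0, 0, 3, 1] + q ![3, 0, 0, 1],
      q ![2, 0, 0, 2]],
    ![-(1/3) * q ![0, 0, 1, 3] + -(1/3) * q ![0, 0, 4, 0] + q ![3, 0, 1, 0],
      q ![2, 0, 1, 1],
      q ![1, 0, 1, 2]],
    ![q ![2, 0, 2, 0],
      q ![1, 0, 2, 1],
      q ![0, 0, 2, 2]]]) (by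
    intro a b ha hb
    have h := hv ![1, 0, a, b] ⟨a, b, ha, hb, by simp⟩
    simp at h
    simp
    linear_combination h - (q ![0, 0, 3, 1] * a ^ 0 * b ^ 1 + q ![0, 0, 4, 0] * a ^ 1 * b ^ 0 + q ![1, 0, 3, 0] * a ^ 0 * b ^ 0) * ha - (q ![0, 0, 0, 4] * a ^ 0 * b ^ 1 + q ![0, 0, 1, 3] * a ^ 1 * b ^ 0 + q ![1, 0, 0, 3] * a ^ 0 * b ^ 0) * hb)

  have F2 := biquad_zero (![![-(1/3) * q ![1, 0, 0, 3] + -(1/3) * q ![1, 3, 0, 0] + q ![4, 0, 0, 0],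
      -(1/3) * q ![0, 0, 0, 4] + -(1/3) * q ![0, 3, 0, 1] + q ![3, 0, 0, 1],
      q ![2, 0, 0, 2]],
    ![-(1/3) * q ![0, 1, 0, 3] + -(1/3) * q ![0, 4, 0, 0] + q ![3, 1, 0, 0],
      q ![2, 1, 0, 1],
      q ![1, 1, 0, 2]],
    ![q ![2, 2, 0, 0],
      q ![1, 2, 0, 1],
      q ![0, 2, 0, 2]]]) (by
    intro a b ha hb
    have h := hv ![1, a, 0, b] ⟨a, b, ha, hb, by simp⟩
    simp at h
    simp
    linear_combination h - (q ![0, 3, 0, 1] * a ^ 0 * b ^ 1 + q ![0, 4, 0, 0] * a ^ 1 * b ^ 0 + q ![1, 3, 0, 0] * a ^ 0 * b ^ 0) * ha - (q ![0, 0, 0, 4] * a ^ 0 * b ^ 1 + q ![0, 1, 0, 3] * a ^ 1 * b ^ 0 + q ![1, 0, 0, 3] * a ^ 0 * b ^ 0) * hb)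

  have F3 := biquad_zero (![![-(1/3) * q ![1, 0, 3, 0] + -(1/3) * q ![1, 3, 0, 0] + q ![4, 0, 0, 0],
      -(1/3) * q ![0, 0, 4, 0] + -(1/3) * q ![0, 3, 1, 0] + q ![3, 0, 1, 0],
      q ![2, 0, 2, 0]],
    ![-(1/3) * q ![0, 1, 3, 0] + -(1/3) * q ![0, 4, 0, 0] + q ![3, 1, 0, 0],
      q ![2, 1, 1, 0],
      q ![1, 1, 2, 0]],
    ![q ![2, 2, 0, 0],
      q ![1, 2, 1, 0],
      q ![0, 2, 2, 0]]]) (by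
    intro a b ha hb
    have h := hv ![1, a, b, 0] ⟨a, b, ha, hb, by simp⟩
    simp at h
    simp
    linear_combination h - (q ![0, 3, 1, 0] * a ^ 0 * b ^ 1 + q ![0, 4, 0, 0] * a ^ 1 * b ^ 0 + q ![1, 3, 0, 0] * a ^ 0 * b ^ 0) * ha - (q ![0, 0, 4, 0] * a ^ 0 * b ^ 1 + q ![0, 1, 3, 0] * a ^ 1 * b ^ 0 + q ![1, 0, 3, 0] * a ^ 0 * b ^ 0) * hb)

  clear hv
  simp [Fin.forall_fin_succ] at F1 F2 F3
  have z0022 : q ![0, 0, 2, 2] = 0 := by grind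
  have z0202 : q ![0, 2, 0, 2] = 0 := by grind
  have z0220 : q ![0, 2, 2, 0] = 0 := by grind
  have z1012 : q ![1, 0, 1, 2] = 0 := by grind
  have z1021 : q ![1, 0, 2, 1] = 0 := by grind
  have z1102 : q ![1, 1, 0, 2] = 0 := by grind
  have z1120 : q ![1, 1, 2, 0] = 0 := by grind
  have z1201 : q ![1, 2, 0, 1] = 0 := by grind
  have z1210 : q ![1, 2, 1, 0] = 0 := by grind
  have z2011 : q ![2, 0, 1, 1] = 0 := by grind
  have z2101 : q ![2, 1, 0, 1] = 0 := by grind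
  have z2110 : q ![2, 1, 1, 0] = 0 := by grind
  have z2002 : q ![2, 0, 0, 2] = 0 := by grind
  have z2020 : q ![2, 0, 2, 0] = 0 := by grind
  have z2200 : q ![2, 2, 0, 0] = 0 := by grind
  have z1030 : q ![1, 0, 3, 0] = q ![1, 3, 0, 0] := by grind
  have z1003 : q ![1, 0, 0, 3] = q ![1, 3, 0, 0] := by grind
  have z4000 : q ![4, 0, 0, 0] = 2/3 * q ![1, 3, 0, 0] := by grind
  have z0103 : q ![0, 1, 0, 3] = q ![0, 1, 3, 0] := by grind
  have z3100 : q ![3, 1, 0, 0] = (q ![0, 4, 0, 0] + q ![0, 1, 3, 0]) / 3 := by grind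
  have z0013 : q ![0, 0, 1, 3] = q ![0, 3, 1, 0] := by grind
  have z3010 : q ![3, 0, 1, 0] = (q ![0, 0, 4, 0] + q ![0, 3, 1, 0]) / 3 := by grind
  have z0031 : q ![0, 0, 3, 1] = q ![0, 3, 0, 1] := by grind
  have z3001 : q ![3, 0, 0, 1] = (q ![0, 0, 0, 4] + q ![0, 3, 0, 1]) / 3 := by grind
  clear F1 F2 F3
  rw [Submodule.mem_span_range_iff_exists_fun]
  refine ⟨![q ![1, 1, 1, 1], q ![0, 2, 1, 1], q ![0, 1, 2, 1], q ![0, 1, 1, 2], q ![1, 3, 0, 0] / 3, q ![0, 4, 0, 0] / 3, q ![0, 0, 4, 0] / 3, q ![0, 0, 0, 4] / 3, q ![0, 1, 3, 0] / 3, q ![0, 3, 1, 0] / 3, q ![0, 3, 0, 1] / 3], ?_⟩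
  rw [hq, z0013, z0022, z0031, z0103, z0202, z0220, z1003, z1012, z1021, z1030, z1102, z1120, z1201, z1210, z2002, z2011, z2020, z2101, z2110, z2200, z3001, z3010, z3100, z4000]
  simp [quarticBasis, Fin.sum_univ_succ, smul_eq_C_mul]
  have h3 : (C (3 : ℂ) : MvPolynomial (Fin 4) ℂ) * C (3⁻¹ : ℂ) = 1 := by
    rw [← C_mul]; norm_num
  grind

/-- The `27` cusps impose exactly `24` independent conditions on quartic forms:
the space of quartics through them has dimension `11`. -/
theorem finrank_quartics_through_fermat_cusps :
    Module.finrank ℂ ↥quarticsThroughFermatCusps = 11 := by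
  have h : quarticsThroughFermatCusps = Submodule.span ℂ (Set.range quarticBasis) := by
    apply le_antisymm
    · intro P hP
      rw [mem_quartics] at hP
      exact quartic_mem_span P hP.1 hP.2
    · rw [Submodule.span_le]
      rintro _ ⟨i, rfl⟩
      exact (mem_quartics _).2 ⟨quarticBasis_hom i, quarticBasis_vanish i⟩
  rw [h, finrank_span_eq_card quarticBasis_indep]
  simp
end

section
/- The set of singular points of the sextic surface G = 0 in ℙ³(ℂ) equals the set of points represented by z ∈ ℂ⁴∖{0} for which the vector (z₀³, z₁³, z₂³, z₃³) is a nonzero scalar multiple of one of the four vectors (0, 1, 1, 8), (1, 0, 1, 8), (1, 1, 0, −49), (8, 8, −49, 0); this set has exactly 36 elements. -/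
open MvPolynomial

/-- The cubic form `A = (8/9)z₀³ + (8/9)z₁³ − (64/63)z₂³ + (1/63)z₃³`. -/
noncomputable def labsA : MvPolynomial (Fin 4) ℂ :=
  C (8/9 : ℂ) * X 0 ^ 3 + C (8/9 : ℂ) * X 1 ^ 3 - C (64/63 : ℂ) * X 2 ^ 3 + C (1/63 : ℂ) * X 3 ^ 3

/-- The cubic form `B = (1/9)z₀³ + (1/9)z₁³ + (1/63)z₂³ − (1/63)z₃³`. -/
noncomputable def labsB : MvPolynomial (Fin 4) ℂ :=
  C (1/9 : ℂ) * X 0 ^ 3 + C (1/9 : ℂ) * X 1 ^ 3 + C (1/63 : ℂ) * X 2 ^ 3 - C (1/63 : ℂ) * X 3 ^ 3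

/-- The `36`-cuspidal sextic of Labs, `G = (z₀z₁)³ − A·B`. -/
noncomputable def labsG : MvPolynomial (Fin 4) ℂ := (X 0 * X 1) ^ 3 - labsA * labsB

/-- The condition on the cubes of the coordinates. -/
def LabsCond (z : Fin 4 → ℂ) : Prop := ∃ c : ℂ, c ≠ 0 ∧
              ((fun i => z i ^ 3) = c • ![(0 : ℂ), 1, 1, 8] ∨
               (fun i => z i ^ 3) = c • ![(1 : ℂ), 0, 1, 8] ∨
               (fun i => z i ^ 3) = c • ![(1 : ℂ), 1, 0, -49] ∨
               (fun i => z i ^ 3) = c • ![(8 : ℂ), 8, -49, 0])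

set_option maxHeartbeats 1000000 in
/-- The partial derivatives of `G`, evaluated. -/
lemma labs_pderiv (z : Fin 4 → ℂ) (A B : ℂ)
    (hA : 63 * A = 56 * (z 0 ^ 3 + z 1 ^ 3) - 64 * z 2 ^ 3 + z 3 ^ 3)
    (hB : 63 * B = 7 * (z 0 ^ 3 + z 1 ^ 3) + z 2 ^ 3 - z 3 ^ 3) :
    (∀ i : Fin 4, eval z (pderiv i labsG) = 0) ↔
      ((z 0 ^ 3 = 0 ∨ 9 * z 1 ^ 3 = 8 * B + A) ∧ (z 1 ^ 3 = 0 ∨ 9 * z 0 ^ 3 = 8 * B + A) ∧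
       (z 2 ^ 3 = 0 ∨ A = 64 * B) ∧ (z 3 ^ 3 = 0 ∨ A = B)) := by
  have hAp : eval z labsA = A := by
    simp [labsA]; linear_combination (-1/63) * hA
  have hBp : eval z labsB = B := by
    simp [labsB]; linear_combination (-1/63) * hB
  have key : ∀ (x u v t : ℂ) (k : ℂ), k ≠ 0 → t = k * x ^ 2 * (u - v) →
      (t = 0 ↔ (x ^ 3 = 0 ∨ u = v)) := by
    intro x u v t k hk ht
    rw [ht]
    simp [hk, sub_eq_zero]
  have e0 : eval z (pderiv 0 labsG) = (1/3) * z 0 ^ 2 * (9 * z 1 ^ 3 - (8 * B + A)) := by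
    rw [labsG]
    simp only [map_sub, Derivation.leibniz, smul_eq_mul, map_add, map_mul, hAp, hBp]
    simp [labsA, labsB, pderiv_X]
    ring
  have e1 : eval z (pderiv 1 labsG) = (1/3) * z 1 ^ 2 * (9 * z 0 ^ 3 - (8 * B + A)) := by
    rw [labsG]
    simp only [map_sub, Derivation.leibniz, smul_eq_mul, map_add, map_mul, hAp, hBp]
    simp [labsA, labsB, pderiv_X]
    ring
  have e2 : eval z (pderiv 2 labsG) = (-1/21) * z 2 ^ 2 * (A - 64 * B) := by
    rw [labsG]
    simp only [map_sub, Derivation.leibniz, smul_eq_mul, map_add, map_mul, hAp, hBp]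
    simp [labsA, labsB, pderiv_X]
    ring
  have e3 : eval z (pderiv 3 labsG) = (1/21) * z 3 ^ 2 * (A - B) := by
    rw [labsG]
    simp only [map_sub, Derivation.leibniz, smul_eq_mul, map_add, map_mul, hAp, hBp]
    simp [labsA, labsB, pderiv_X]
    ring
  have hall : (∀ i : Fin 4, eval z (pderiv i labsG) = 0) ↔
      (eval z (pderiv 0 labsG) = 0 ∧ eval z (pderiv 1 labsG) = 0 ∧
       eval z (pderiv 2 labsG) = 0 ∧ eval z (pderiv 3 labsG) = 0) := by
    constructor
    · intro h; exact ⟨h 0, h 1, h 2, h 3⟩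
    · rintro ⟨h0, h1, h2, h3⟩ i
      match i with
      | 0 => exact h0
      | 1 => exact h1
      | 2 => exact h2
      | 3 => exact h3
  rw [hall, key _ _ _ _ _ (by norm_num) e0, key _ _ _ _ _ (by norm_num) e1,
    key _ _ _ _ _ (by norm_num) e2, key _ _ _ _ _ (by norm_num) e3]

lemma labs_cube_eq (z : Fin 4 → ℂ) (c p q r s : ℂ) :
    ((fun i => z i ^ 3) = c • ![p, q, r, s]) ↔
      (z 0 ^ 3 = c * p ∧ z 1 ^ 3 = c * q ∧ z 2 ^ 3 = c * r ∧ z 3 ^ 3 = c * s) := by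
  constructor
  · intro h
    exact ⟨congrFun h 0, congrFun h 1, congrFun h 2, congrFun h 3⟩
  · rintro ⟨h0, h1, h2, h3⟩
    funext i
    fin_cases i <;> assumption

lemma labs_alg (a b c d A B : ℂ) (hne : ¬ (a = 0 ∧ b = 0 ∧ c = 0 ∧ d = 0))
    (hA : 63 * A = 56 * (a + b) - 64 * c + d)
    (hB : 63 * B = 7 * (a + b) + c - d)
    (h0 : a = 0 ∨ 9 * b = 8 * B + A) (h1 : b = 0 ∨ 9 * a = 8 * B + A)
    (h2 : c = 0 ∨ A = 64 * B) (h3 : d = 0 ∨ A = B) :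
    (a = 0 ∧ c = b ∧ d = 8 * b ∧ b ≠ 0) ∨ (b = 0 ∧ c = a ∧ d = 8 * a ∧ a ≠ 0) ∨
    (b = a ∧ c = 0 ∧ d = -49 * a ∧ a ≠ 0) ∨ (b = a ∧ 8 * c = -49 * a ∧ d = 0 ∧ a ≠ 0) := by
  rcases h0 with h0 | h0 <;> rcases h1 with h1 | h1 <;> rcases h2 with h2 | h2 <;>
    rcases h3 with h3 | h3 <;> grind

lemma labs_sing_iff (z : Fin 4 → ℂ) (hz : z ≠ 0) :
    (∀ i : Fin 4, eval z (pderiv i labsG) = 0) ↔ LabsCond z := by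
  obtain ⟨A, hA⟩ : ∃ A, 63 * A = 56 * (z 0 ^ 3 + z 1 ^ 3) - 64 * z 2 ^ 3 + z 3 ^ 3 :=
    ⟨_, mul_div_cancel₀ _ (by norm_num)⟩
  obtain ⟨B, hB⟩ : ∃ B, 63 * B = 7 * (z 0 ^ 3 + z 1 ^ 3) + z 2 ^ 3 - z 3 ^ 3 :=
    ⟨_, mul_div_cancel₀ _ (by norm_num)⟩
  rw [labs_pderiv z A B hA hB]
  simp only [LabsCond, labs_cube_eq]
  have hne : ¬ (z 0 ^ 3 = 0 ∧ z 1 ^ 3 = 0 ∧ z 2 ^ 3 = 0 ∧ z 3 ^ 3 = 0) := by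
    rintro ⟨h0, h1, h2, h3⟩
    apply hz
    funext i
    fin_cases i
    · exact pow_eq_zero_iff (by norm_num) |>.1 h0
    · exact pow_eq_zero_iff (by norm_num) |>.1 h1
    · exact pow_eq_zero_iff (by norm_num) |>.1 h2
    · exact pow_eq_zero_iff (by norm_num) |>.1 h3
  clear hz
  generalize z 0 ^ 3 = a at *
  generalize z 1 ^ 3 = b at *
  generalize z 2 ^ 3 = c at *
  generalize z 3 ^ 3 = d at *
  constructor
  · rintro ⟨h0, h1, h2, h3⟩
    rcases labs_alg a b c d A B hne hA hB h0 h1 h2 h3 with h | h | h | h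
    · exact ⟨b, h.2.2.2, by grind⟩
    · exact ⟨a, h.2.2.2, by grind⟩
    · exact ⟨a, h.2.2.2, by grind⟩
    · exact ⟨a / 8, by grind, by grind⟩
  · rintro ⟨k, hk, h | h | h | h⟩ <;> obtain ⟨rfl, rfl, rfl, rfl⟩ := h <;> grind

/-- Normalised representatives of the 36 points. -/
noncomputable def labsRep (ζ : Fin 3 → ℂ) (r : ℂ) : Fin 4 × Fin 3 × Fin 3 → Fin 4 → ℂ := fun t =>
  ![![0, 1, ζ t.2.1, 2 * ζ t.2.2], ![1, 0, ζ t.2.1, 2 * ζ t.2.2],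
    ![1, ζ t.2.1, 0, r * ζ t.2.2], ![2, 2 * ζ t.2.1, r * ζ t.2.2, 0]] t.1

lemma labsRep_inj (ζ : Fin 3 → ℂ) (r : ℂ) (hr : r ^ 3 = -49) (hζ : ∀ i, ζ i ^ 3 = 1)
    (hinj : Function.Injective ζ) (s t : Fin 4 × Fin 3 × Fin 3) (a : ℂ)
    (h : a • labsRep ζ r t = labsRep ζ r s) : s = t := by
  obtain ⟨s, i, j⟩ := s
  obtain ⟨t, k, l⟩ := t
  have hr0 : r ≠ 0 := by rintro rfl; norm_num at hr
  have hz0 : ∀ i, ζ i ≠ 0 := fun i h => by have := hζ i; rw [h] at this; norm_num at this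
  have g0 := congrFun h 0
  have g1 := congrFun h 1
  have g2 := congrFun h 2
  have g3 := congrFun h 3
  have hi := hz0 i
  have hj := hz0 j
  have hip := @hinj i k
  have hjp := @hinj j l
  clear h hr hζ
  fin_cases s <;> fin_cases t <;> simp [labsRep] at g0 g1 g2 g3 <;> grind

lemma labsRep_surj (ζ : Fin 3 → ℂ) (r : ℂ) (hr : r ^ 3 = -49)
    (hsurj : ∀ x : ℂ, x ^ 3 = 1 → ∃ i, ζ i = x) (z : Fin 4 → ℂ) (h : LabsCond z) :
    ∃ (t : Fin 4 × Fin 3 × Fin 3) (a : ℂ), a • labsRep ζ r t = z := by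
  have hr0 : r ≠ 0 := by rintro rfl; norm_num at hr
  have key : ∀ x y m : ℂ, x ≠ 0 → m ≠ 0 → y ^ 3 = m ^ 3 * x ^ 3 → ∃ i, x * (m * ζ i) = y := by
    intro x y m hx hm hy
    obtain ⟨i, hi⟩ := hsurj (y / (m * x)) (by
      rw [div_pow, hy, mul_pow]; field_simp)
    exact ⟨i, by rw [hi]; field_simp⟩
  obtain ⟨c, hc, h⟩ := h
  simp only [labs_cube_eq] at h
  have nz : ∀ x k : ℂ, k ≠ 0 → x ^ 3 = c * k → x ≠ 0 := by
    rintro x k hk h rfl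
    have := mul_ne_zero hc hk
    rw [← h] at this; norm_num at this
  rcases h with ⟨h0, h1, h2, h3⟩ | ⟨h0, h1, h2, h3⟩ | ⟨h0, h1, h2, h3⟩ | ⟨h0, h1, h2, h3⟩
  · have hb := nz _ _ (by norm_num) h1
    obtain ⟨i, hi⟩ := key (z 1) (z 2) 1 hb (by norm_num) (by grind)
    obtain ⟨j, hj⟩ := key (z 1) (z 3) 2 hb (by norm_num) (by grind)
    have h0p : z 0 = 0 := by simpa using h0
    refine ⟨(0, i, j), z 1, ?_⟩
    funext n
    fin_cases n <;> simp [labsRep] <;> grind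
  · have hb := nz _ _ (by norm_num) h0
    obtain ⟨i, hi⟩ := key (z 0) (z 2) 1 hb (by norm_num) (by grind)
    obtain ⟨j, hj⟩ := key (z 0) (z 3) 2 hb (by norm_num) (by grind)
    have h0p : z 1 = 0 := by simpa using h1
    refine ⟨(1, i, j), z 0, ?_⟩
    funext n
    fin_cases n <;> simp [labsRep] <;> grind
  · have hb := nz _ _ (by norm_num) h0
    obtain ⟨i, hi⟩ := key (z 0) (z 1) 1 hb (by norm_num) (by grind)
    obtain ⟨j, hj⟩ := key (z 0) (z 3) r hb hr0 (by grind)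
    have h0p : z 2 = 0 := by simpa using h2
    refine ⟨(2, i, j), z 0, ?_⟩
    funext n
    fin_cases n <;> simp [labsRep] <;> grind
  · have hb := nz _ _ (by norm_num) h0
    obtain ⟨i, hi⟩ := key (z 0) (z 1) 1 hb (by norm_num) (by grind)
    obtain ⟨j, hj⟩ := key (z 0) (z 2) (r / 2) hb (by simpa using hr0) (by grind)
    have h0p : z 3 = 0 := by simpa using h3
    refine ⟨(3, i, j), z 0 / 2, ?_⟩
    funext n
    fin_cases n <;> simp [labsRep] <;> grind

lemma labsRep_cond (ζ : Fin 3 → ℂ) (r : ℂ) (hr : r ^ 3 = -49) (hζ : ∀ i, ζ i ^ 3 = 1)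
    (t : Fin 4 × Fin 3 × Fin 3) : labsRep ζ r t ≠ 0 ∧ LabsCond (labsRep ζ r t) := by
  obtain ⟨t, i, j⟩ := t
  refine ⟨fun h => ?_, 1, one_ne_zero, ?_⟩
  · have g0 := congrFun h 0
    have g1 := congrFun h 1
    fin_cases t <;> simp [labsRep] at g0 g1
  · simp only [labs_cube_eq]
    fin_cases t <;> simp [labsRep, mul_pow, hζ, hr] <;> norm_num

/-- The singular locus of the Labs sextic `G = 0` in `ℙ³(ℂ)` is exactly the set of
points represented by `z` with `(z₀³, z₁³, z₂³, z₃³)` a nonzero scalar multiple of one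
of `(0,1,1,8)`, `(1,0,1,8)`, `(1,1,0,−49)`, `(8,8,−49,0)`; it has exactly `36` points. -/
theorem sing_labs_sextic :
    ({p : Projectivization ℂ (Fin 4 → ℂ) |
        ∃ (z : Fin 4 → ℂ) (hz : z ≠ 0), Projectivization.mk ℂ z hz = p ∧
          ∀ i : Fin 4, eval z (pderiv i labsG) = 0}
      = {p : Projectivization ℂ (Fin 4 → ℂ) |
          ∃ (z : Fin 4 → ℂ) (hz : z ≠ 0), Projectivization.mk ℂ z hz = p ∧
            ∃ c : ℂ, c ≠ 0 ∧
              ((fun i => z i ^ 3) = c • ![(0 : ℂ), 1, 1, 8] ∨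
               (fun i => z i ^ 3) = c • ![(1 : ℂ), 0, 1, 8] ∨
               (fun i => z i ^ 3) = c • ![(1 : ℂ), 1, 0, -49] ∨
               (fun i => z i ^ 3) = c • ![(8 : ℂ), 8, -49, 0])}) ∧
    {p : Projectivization ℂ (Fin 4 → ℂ) |
        ∃ (z : Fin 4 → ℂ) (hz : z ≠ 0), Projectivization.mk ℂ z hz = p ∧
          ∀ i : Fin 4, eval z (pderiv i labsG) = 0}.ncard = 36 := by
  have hset : {p : Projectivization ℂ (Fin 4 → ℂ) |
        ∃ (z : Fin 4 → ℂ) (hz : z ≠ 0), Projectivization.mk ℂ z hz = p ∧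
          ∀ i : Fin 4, eval z (pderiv i labsG) = 0} =
      {p : Projectivization ℂ (Fin 4 → ℂ) |
        ∃ (z : Fin 4 → ℂ) (hz : z ≠ 0), Projectivization.mk ℂ z hz = p ∧ LabsCond z} := by
    ext p
    constructor
    · rintro ⟨z, hz, hp, h⟩
      exact ⟨z, hz, hp, (labs_sing_iff z hz).1 h⟩
    · rintro ⟨z, hz, hp, h⟩
      exact ⟨z, hz, hp, (labs_sing_iff z hz).2 h⟩
  refine ⟨hset, ?_⟩
  rw [hset]
  obtain ⟨r, hr⟩ := IsAlgClosed.exists_pow_nat_eq (-49 : ℂ) (n := 3) (by norm_num)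
  have hω := Complex.isPrimitiveRoot_exp 3 (by norm_num)
  generalize Complex.exp (2 * Real.pi * Complex.I / (3 : ℕ)) = ω at hω
  let ζ : Fin 3 → ℂ := fun i => ω ^ (i : ℕ)
  have hζ : ∀ i, ζ i ^ 3 = 1 := fun i => by
    simp only [ζ]
    rw [← pow_mul, mul_comm, pow_mul, hω.pow_eq_one, one_pow]
  have hinj : Function.Injective ζ := fun i j h => Fin.ext (hω.pow_inj i.2 j.2 h)
  have hsurj : ∀ x : ℂ, x ^ 3 = 1 → ∃ i, ζ i = x := fun x hx => by
    obtain ⟨i, hi, h⟩ := hω.eq_pow_of_pow_eq_one hx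
    exact ⟨⟨i, hi⟩, h⟩
  let f : Fin 4 × Fin 3 × Fin 3 → Projectivization ℂ (Fin 4 → ℂ) := fun t =>
    Projectivization.mk ℂ (labsRep ζ r t) (labsRep_cond ζ r hr hζ t).1
  have hf : Function.Injective f := by
    intro s t h
    obtain ⟨a, ha⟩ := (Projectivization.mk_eq_mk_iff' ℂ _ _ _ _).1 h
    exact labsRep_inj ζ r hr hζ hinj s t a ha
  have hrange : {p : Projectivization ℂ (Fin 4 → ℂ) |
        ∃ (z : Fin 4 → ℂ) (hz : z ≠ 0), Projectivization.mk ℂ z hz = p ∧ LabsCond z} =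
      Set.range f := by
    ext p
    constructor
    · rintro ⟨z, hz, rfl, h⟩
      obtain ⟨t, a, ha⟩ := labsRep_surj ζ r hr hsurj z h
      refine ⟨t, ((Projectivization.mk_eq_mk_iff' ℂ _ _ _ _).2 ⟨a, ha⟩).symm⟩
    · rintro ⟨t, rfl⟩
      exact ⟨_, (labsRep_cond ζ r hr hζ t).1, rfl, (labsRep_cond ζ r hr hζ t).2⟩
  rw [hrange, ← Set.image_univ, Set.ncard_image_of_injective _ hf, Set.ncard_univ]
  simp
end

section
/- The complex vector space of homogeneous polynomials of degree 4 in ℂ[z₀,z₁,z₂,z₃] that vanish at every singular point of the surface G = 0 has dimension 5 (equivalently, the 36 singular points impose exactly 30 independent linear conditions on the 35-dimensional space of quartic forms). -/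
open MvPolynomial

/-- The space of homogeneous quartic forms vanishing at every singular point of the
Labs sextic `G = 0`. -/
noncomputable def quarticsThroughLabsCusps : Submodule ℂ (MvPolynomial (Fin 4) ℂ) :=
  homogeneousSubmodule (Fin 4) ℂ 4 ⊓
    ⨅ (z : Fin 4 → ℂ) (_ : z ≠ 0 ∧ ∀ i : Fin 4, eval z (pderiv i labsG) = 0),
      LinearMap.ker (aeval z : MvPolynomial (Fin 4) ℂ →ₐ[ℂ] ℂ).toLinearMap

lemma labs_sing (z : Fin 4 → ℂ) :
    (∀ i : Fin 4, eval z (pderiv i labsG) = 0) ↔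
      (z 0 ^ 2 * (-16 * z 0 ^ 3 + 65 * z 1 ^ 3 + 8 * z 2 ^ 3 + z 3 ^ 3) = 0 ∧
       z 1 ^ 2 * (65 * z 0 ^ 3 - 16 * z 1 ^ 3 + 8 * z 2 ^ 3 + z 3 ^ 3) = 0 ∧
       z 2 ^ 2 * (392 * z 0 ^ 3 + 392 * z 1 ^ 3 + 128 * z 2 ^ 3 - 65 * z 3 ^ 3) = 0 ∧
       z 3 ^ 2 * (49 * z 0 ^ 3 + 49 * z 1 ^ 3 - 65 * z 2 ^ 3 + 2 * z 3 ^ 3) = 0) := by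
  have h0 : eval z (pderiv 0 labsG) =
      (3/81) * (z 0 ^ 2 * (-16 * z 0 ^ 3 + 65 * z 1 ^ 3 + 8 * z 2 ^ 3 + z 3 ^ 3)) := by
    simp [labsG, labsA, labsB, pderiv_X, Derivation.leibniz, Derivation.leibniz_pow]
    ring
  have h1 : eval z (pderiv 1 labsG) =
      (3/81) * (z 1 ^ 2 * (65 * z 0 ^ 3 - 16 * z 1 ^ 3 + 8 * z 2 ^ 3 + z 3 ^ 3)) := by
    simp [labsG, labsA, labsB, pderiv_X, Derivation.leibniz, Derivation.leibniz_pow]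
    ring
  have h2 : eval z (pderiv 2 labsG) =
      (3/3969) * (z 2 ^ 2 * (392 * z 0 ^ 3 + 392 * z 1 ^ 3 + 128 * z 2 ^ 3 - 65 * z 3 ^ 3)) := by
    simp [labsG, labsA, labsB, pderiv_X, Derivation.leibniz, Derivation.leibniz_pow]
    ring
  have h3 : eval z (pderiv 3 labsG) =
      (3/3969) * (z 3 ^ 2 * (49 * z 0 ^ 3 + 49 * z 1 ^ 3 - 65 * z 2 ^ 3 + 2 * z 3 ^ 3)) := by
    simp [labsG, labsA, labsB, pderiv_X, Derivation.leibniz, Derivation.leibniz_pow]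
    ring
  rw [Fin.forall_fin_succ, Fin.forall_fin_succ, Fin.forall_fin_succ, Fin.forall_fin_one]
  change (eval z (pderiv 0 labsG) = 0 ∧ eval z (pderiv 1 labsG) = 0 ∧
    eval z (pderiv 2 labsG) = 0 ∧ eval z (pderiv 3 labsG) = 0) ↔ _
  rw [h0, h1, h2, h3]
  simp

/-- The five quartics. -/
noncomputable def labsQ : Fin 5 → MvPolynomial (Fin 4) ℂ :=
  ![X 0 * (C (-16) * X 0 ^ 3 + C 65 * X 1 ^ 3 + C 8 * X 2 ^ 3 + C 1 * X 3 ^ 3),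
    X 1 * (C 65 * X 0 ^ 3 + C (-16) * X 1 ^ 3 + C 8 * X 2 ^ 3 + C 1 * X 3 ^ 3),
    X 2 * (C 392 * X 0 ^ 3 + C 392 * X 1 ^ 3 + C 128 * X 2 ^ 3 + C (-65) * X 3 ^ 3),
    X 3 * (C 49 * X 0 ^ 3 + C 49 * X 1 ^ 3 + C (-65) * X 2 ^ 3 + C 2 * X 3 ^ 3),
    X 0 * X 1 * (X 2 * X 3)]

lemma labsQ_hom (i : Fin 5) : (labsQ i).IsHomogeneous 4 := by
  have hc : ∀ (i j : Fin 4) (a b c d : ℂ), (X i * (C a * X 0 ^ 3 + C b * X 1 ^ 3 + C c * X 2 ^ 3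
      + C d * X 3 ^ 3) : MvPolynomial (Fin 4) ℂ).IsHomogeneous 4 := by
    intro i j a b c d
    have h3 : ∀ (k : Fin 4) (a : ℂ), (C a * X k ^ 3 : MvPolynomial (Fin 4) ℂ).IsHomogeneous 3 := by
      intro k a
      simpa using (isHomogeneous_C (Fin 4) a).mul ((isHomogeneous_X ℂ k).pow 3)
    exact (isHomogeneous_X ℂ i).mul ((((h3 0 a).add (h3 1 b)).add (h3 2 c)).add (h3 3 d))
  fin_cases i
  · exact hc 0 0 _ _ _ _
  · exact hc 1 0 _ _ _ _
  · exact hc 2 0 _ _ _ _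
  · exact hc 3 0 _ _ _ _
  · exact ((isHomogeneous_X ℂ 0).mul (isHomogeneous_X ℂ 1)).mul
      ((isHomogeneous_X ℂ 2).mul (isHomogeneous_X ℂ 3))

lemma mem_quartics_s15 (f : MvPolynomial (Fin 4) ℂ) : f ∈ quarticsThroughLabsCusps ↔
    f.IsHomogeneous 4 ∧ ∀ z : Fin 4 → ℂ,
      (z ≠ 0 ∧ ∀ i : Fin 4, eval z (pderiv i labsG) = 0) → eval z f = 0 := by
  simp only [quarticsThroughLabsCusps, Submodule.mem_inf, Submodule.mem_iInf,
    mem_homogeneousSubmodule, LinearMap.mem_ker, AlgHom.toLinearMap_apply]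
  rfl

lemma labsQ_mem (i : Fin 5) : labsQ i ∈ quarticsThroughLabsCusps := by
  rw [mem_quartics_s15]
  refine ⟨labsQ_hom i, ?_⟩
  rintro z ⟨hz, hs⟩
  rw [labs_sing] at hs
  obtain ⟨h0, h1, h2, h3⟩ := hs
  have key : ∀ a b : ℂ, a ^ 2 * b = 0 → a * b = 0 := by
    intro a b h
    rcases mul_eq_zero.mp h with h | h
    · rw [pow_eq_zero_iff (by norm_num)] at h
      simp [h]
    · simp [h]
  fin_cases i
  · have := key _ _ h0
    simp [labsQ]
    simpa using this
  · have := key _ _ h1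
    simp [labsQ]
    simpa [sub_eq_add_neg] using this
  · have := key _ _ h2
    simp [labsQ]
    simpa [sub_eq_add_neg] using this
  · have := key _ _ h3
    simp [labsQ]
    simpa [sub_eq_add_neg] using this
  · simp only [labsQ]
    by_contra hne
    simp at hne
    obtain ⟨⟨n0, n1⟩, n2, n3⟩ := hne
    simp [n0] at h0
    simp [n1] at h1
    simp [n2] at h2
    simp [n3] at h3
    apply n0
    have e1 : z 0 ^ 3 = z 1 ^ 3 := by linear_combination (h1 - h0) / 81
    have : z 0 ^ 3 = 0 := by grind
    simpa using this

lemma labsQ_indep : LinearIndependent ℂ labsQ := by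
  rw [Fintype.linearIndependent_iff]
  intro g hg
  have hev : ∀ z : Fin 4 → ℂ, eval z (∑ i, g i • labsQ i) = 0 := by
    intro z; rw [hg]; simp
  simp only [Fin.sum_univ_five, labsQ] at hev
  have e0 := hev ![1,0,0,0]
  have e1 := hev ![0,1,0,0]
  have e2 := hev ![0,0,1,0]
  have e3 := hev ![0,0,0,1]
  have e4 := hev ![1,1,1,1]
  simp [smul_eval] at e0 e1 e2 e3 e4
  simp [e0, e1, e2, e3] at e4
  intro i
  fin_cases i <;> simp [e0, e1, e2, e3, e4]

lemma vander (u v w o : ℂ) (ho : o ^ 2 + o + 1 = 0)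
    (h : ∀ s : ℂ, s ^ 3 = 1 → u + v * s + w * s ^ 2 = 0) : u = 0 ∧ v = 0 ∧ w = 0 := by
  have ho3 : o ^ 3 = 1 := by linear_combination (o - 1) * ho
  have h1 := h 1 (by norm_num)
  have h2 := h o ho3
  have h3 := h (o ^ 2) (by linear_combination (o ^ 3 + 1) * ho3)
  refine ⟨?_, ?_, ?_⟩
  · grind
  · grind
  · grind

lemma ternary (o : ℂ) (ho : o ^ 2 + o + 1 = 0) (a b c : ℂ) (ha : a ≠ 0) (hb : b ≠ 0) (hc : c ≠ 0)
    (x4 y4 z4 x3y x3z xy3 y3z xz3 yz3 x2y2 x2z2 y2z2 x2yz xy2z xyz2 : ℂ)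
    (h : ∀ x y z : ℂ, x ^ 3 = a ^ 3 → y ^ 3 = b ^ 3 → z ^ 3 = c ^ 3 →
      x4 * x ^ 4 + y4 * y ^ 4 + z4 * z ^ 4 + x3y * (x ^ 3 * y) + x3z * (x ^ 3 * z)
      + xy3 * (x * y ^ 3) + y3z * (y ^ 3 * z) + xz3 * (x * z ^ 3) + yz3 * (y * z ^ 3)
      + x2y2 * (x ^ 2 * y ^ 2) + x2z2 * (x ^ 2 * z ^ 2) + y2z2 * (y ^ 2 * z ^ 2)
      + x2yz * (x ^ 2 * y * z) + xy2z * (x * y ^ 2 * z) + xyz2 * (x * y * z ^ 2) = 0) :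
    (x4 * a ^ 3 + xy3 * b ^ 3 + xz3 * c ^ 3 = 0 ∧
     x3y * a ^ 3 + y4 * b ^ 3 + yz3 * c ^ 3 = 0 ∧
     x3z * a ^ 3 + y3z * b ^ 3 + z4 * c ^ 3 = 0) ∧
    x2y2 = 0 ∧ x2z2 = 0 ∧ y2z2 = 0 ∧ x2yz = 0 ∧ xy2z = 0 ∧ xyz2 = 0 := by
  have hx : ∀ y z : ℂ, y ^ 3 = b ^ 3 → z ^ 3 = c ^ 3 →
      ((y * (x3y * a ^ 3 + y4 * b ^ 3 + yz3 * c ^ 3)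
        + z * (x3z * a ^ 3 + y3z * b ^ 3 + z4 * c ^ 3) + y2z2 * (y ^ 2 * z ^ 2)) = 0 ∧
       a * (x4 * a ^ 3 + xy3 * b ^ 3 + xz3 * c ^ 3 + xy2z * (y ^ 2 * z) + xyz2 * (y * z ^ 2)) = 0 ∧
       a ^ 2 * (x2y2 * y ^ 2 + x2z2 * z ^ 2 + x2yz * (y * z)) = 0) := by
    intro y z hy hz
    apply vander _ _ _ o ho
    intro s hs
    have := h (s * a) y z (by rw [mul_pow, hs, one_mul]) hy hz
    rw [← this, ← hy, ← hz]
    linear_combination (-x3y * a ^ 3 * y - x3z * a ^ 3 * z - x4 * a ^ 4 * s) * hs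
  have hy : ∀ z : ℂ, z ^ 3 = c ^ 3 →
      (z * (x3z * a ^ 3 + y3z * b ^ 3 + z4 * c ^ 3) = 0 ∧
        b * (x3y * a ^ 3 + y4 * b ^ 3 + yz3 * c ^ 3) = 0 ∧ y2z2 * (b ^ 2 * z ^ 2) = 0) ∧
      (x4 * a ^ 3 + xy3 * b ^ 3 + xz3 * c ^ 3 = 0 ∧ xyz2 * (b * z ^ 2) = 0 ∧
        xy2z * (b ^ 2 * z) = 0) ∧
      (x2z2 * z ^ 2 = 0 ∧ x2yz * (b * z) = 0 ∧ x2y2 * b ^ 2 = 0) := by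
    intro z hz
    refine ⟨vander _ _ _ o ho ?_, vander _ _ _ o ho ?_, vander _ _ _ o ho ?_⟩
    all_goals
      intro s hs
      obtain ⟨h1, h2, h3⟩ := hx (s * b) z (by rw [mul_pow, hs, one_mul]) hz
      simp only [mul_eq_zero, ha, pow_eq_zero_iff, ne_eq, OfNat.ofNat_ne_zero, not_false_eq_true,
        false_or] at h2 h3
    · linear_combination h1
    · linear_combination h2
    · linear_combination h3
  obtain ⟨⟨q1, q2, q3⟩, ⟨q4, q5, q6⟩, q7, q8, q9⟩ := hy c rfl
  simp [hb, hc] at q1 q2 q3 q4 q5 q6 q7 q8 q9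
  exact ⟨⟨q4, q2, q1⟩, q9, q7, q3, q8, q6, q5⟩

/-- Expansion of a quartic. -/
lemma quartic_expand (f : MvPolynomial (Fin 4) ℂ) (hf : f.IsHomogeneous 4) :
    ∃ c : ℕ → ℕ → ℕ → ℕ → ℂ, f = ∑ t ∈ Finset.Nat.antidiagonalTuple 4 4,
      C (c (t 0) (t 1) (t 2) (t 3)) * (X 0 ^ t 0 * X 1 ^ t 1 * X 2 ^ t 2 * X 3 ^ t 3) := by
  refine ⟨fun a b c d => coeff (Finsupp.equivFunOnFinite.symm ![a, b, c, d]) f, ?_⟩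
  have hm : ∀ (t : Fin 4 → ℕ) (r : ℂ), C r * (X 0 ^ t 0 * X 1 ^ t 1 * X 2 ^ t 2 * X 3 ^ t 3) =
      monomial (Finsupp.equivFunOnFinite.symm t) r := by
    intro t r
    rw [monomial_eq, Finsupp.prod_fintype _ _ (by simp), Fin.prod_univ_four]
    rfl
  have ht : ∀ t : Fin 4 → ℕ, ![t 0, t 1, t 2, t 3] = t := by
    intro t; ext i; fin_cases i <;> rfl
  simp only [hm, ht]
  ext d
  rw [coeff_sum]
  simp only [coeff_monomial]
  by_cases hd : d.degree = 4
  · rw [Finset.sum_eq_single (Finsupp.equivFunOnFinite d)]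
    · simp
    · intro b _ hb
      rw [if_neg]
      rintro rfl
      simp at hb
    · intro hn
      exfalso; apply hn
      rw [Finset.Nat.mem_antidiagonalTuple]
      rw [Finsupp.degree_eq_sum] at hd
      exact hd
  · rw [hf.coeff_eq_zero hd, Finset.sum_eq_zero]
    intro t ht'
    rw [if_neg]
    rintro rfl
    apply hd
    rw [Finset.Nat.mem_antidiagonalTuple] at ht'
    rw [Finsupp.degree_eq_sum]
    exact ht'

lemma quartic_sum {M : Type*} [AddCommMonoid M] (F : ℕ → ℕ → ℕ → ℕ → M) :
    ∑ t ∈ Finset.Nat.antidiagonalTuple 4 4, F (t 0) (t 1) (t 2) (t 3) =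
    (F 4 0 0 0 + F 1 3 0 0 + F 1 0 3 0 + F 1 0 0 3)
    + (F 3 1 0 0 + F 0 4 0 0 + F 0 1 3 0 + F 0 1 0 3)
    + (F 3 0 1 0 + F 0 3 1 0 + F 0 0 4 0 + F 0 0 1 3)
    + (F 3 0 0 1 + F 0 3 0 1 + F 0 0 3 1 + F 0 0 0 4)
    + (F 2 2 0 0 + F 2 0 2 0 + F 2 0 0 2 + F 0 2 2 0 + F 0 2 0 2 + F 0 0 2 2)
    + (F 2 1 1 0 + F 2 1 0 1 + F 2 0 1 1 + F 1 2 1 0 + F 1 2 0 1 + F 0 2 1 1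
      + F 1 1 2 0 + F 1 0 2 1 + F 0 1 2 1 + F 1 1 0 2 + F 1 0 1 2 + F 0 1 1 2)
    + F 1 1 1 1 := by
  have h : (List.Nat.antidiagonalTuple 4 4).map (fun t => (t 0, t 1, t 2, t 3)) =
      [(0, 0, 0, 4), (0, 0, 1, 3), (0, 0, 2, 2), (0, 0, 3, 1), (0, 0, 4, 0), (0, 1, 0, 3),
      (0, 1, 1, 2), (0, 1, 2, 1), (0, 1, 3, 0), (0, 2, 0, 2), (0, 2, 1, 1), (0, 2, 2, 0),
      (0, 3, 0, 1), (0, 3, 1, 0), (0, 4, 0, 0), (1, 0, 0, 3), (1, 0, 1, 2), (1, 0, 2, 1),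
      (1, 0, 3, 0), (1, 1, 0, 2), (1, 1, 1, 1), (1, 1, 2, 0), (1, 2, 0, 1), (1, 2, 1, 0),
      (1, 3, 0, 0), (2, 0, 0, 2), (2, 0, 1, 1), (2, 0, 2, 0), (2, 1, 0, 1), (2, 1, 1, 0),
      (2, 2, 0, 0), (3, 0, 0, 1), (3, 0, 1, 0), (3, 1, 0, 0), (4, 0, 0, 0)] := by
    decide
  have h2 : ∑ t ∈ Finset.Nat.antidiagonalTuple 4 4, F (t 0) (t 1) (t 2) (t 3) =
      (((List.Nat.antidiagonalTuple 4 4).map (fun t => (t 0, t 1, t 2, t 3))).map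
        (fun p => F p.1 p.2.1 p.2.2.1 p.2.2.2)).sum := by
    rw [List.map_map]
    rfl
  rw [h2, h]
  simp only [List.map_cons, List.map_nil, List.sum_cons, List.sum_nil]
  abel

lemma mem_span (f : MvPolynomial (Fin 4) ℂ) (hf : f ∈ quarticsThroughLabsCusps) :
    f ∈ Submodule.span ℂ (Set.range labsQ) := by
  rw [mem_quartics_s15] at hf
  obtain ⟨hh, hv⟩ := hf
  obtain ⟨c, hc⟩ := quartic_expand f hh
  rw [quartic_sum (fun i j k l => C (c i j k l) * (X 0 ^ i * X 1 ^ j * X 2 ^ k * X 3 ^ l))] at hc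
  obtain ⟨o, ho⟩ : ∃ o : ℂ, o ^ 2 + o + 1 = 0 := by
    obtain ⟨s, hs⟩ := IsAlgClosed.exists_pow_nat_eq (-3 : ℂ) (n := 2) (by norm_num)
    exact ⟨(-1 + s) / 2, by linear_combination hs / 4⟩
  obtain ⟨r, hr⟩ := IsAlgClosed.exists_pow_nat_eq (-49 : ℂ) (n := 3) (by norm_num)
  have hr0 : r ≠ 0 := by
    rintro rfl
    norm_num at hr
  have hcube : ∀ x a : ℂ, a ≠ 0 → x ^ 3 = a ^ 3 → x ≠ 0 := by
    rintro x a ha h rfl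
    apply ha
    simpa using h.symm
  have t0 := ternary o ho 1 1 2 (by norm_num) (by norm_num) (by norm_num)
    (c 0 4 0 0) (c 0 0 4 0) (c 0 0 0 4) (c 0 3 1 0) (c 0 3 0 1) (c 0 1 3 0) (c 0 0 3 1)
    (c 0 1 0 3) (c 0 0 1 3) (c 0 2 2 0) (c 0 2 0 2) (c 0 0 2 2) (c 0 2 1 1) (c 0 1 2 1)
    (c 0 1 1 2) (by
      intro x y z hx hy hz
      have hx0 := hcube x _ (by norm_num) hx
      have h := hv ![0, x, y, z] ⟨fun h => hx0 (by simpa using congrFun h 1), by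
        rw [labs_sing]
        simp [hx, hy, hz]
        norm_num⟩
      rw [hc] at h
      simp only [map_add, map_mul, map_pow, eval_C, eval_X, Matrix.cons_val] at h
      linear_combination h)
  have t1 := ternary o ho 1 1 2 (by norm_num) (by norm_num) (by norm_num)
    (c 4 0 0 0) (c 0 0 4 0) (c 0 0 0 4) (c 3 0 1 0) (c 3 0 0 1) (c 1 0 3 0) (c 0 0 3 1)
    (c 1 0 0 3) (c 0 0 1 3) (c 2 0 2 0) (c 2 0 0 2) (c 0 0 2 2) (c 2 0 1 1) (c 1 0 2 1)
    (c 1 0 1 2) (by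
      intro x y z hx hy hz
      have hx0 := hcube x _ (by norm_num) hx
      have h := hv ![x, 0, y, z] ⟨fun h => hx0 (by simpa using congrFun h 0), by
        rw [labs_sing]
        simp [hx, hy, hz]
        norm_num⟩
      rw [hc] at h
      simp only [map_add, map_mul, map_pow, eval_C, eval_X, Matrix.cons_val] at h
      linear_combination h)
  have t2 := ternary o ho 1 1 r (by norm_num) (by norm_num) hr0
    (c 4 0 0 0) (c 0 4 0 0) (c 0 0 0 4) (c 3 1 0 0) (c 3 0 0 1) (c 1 3 0 0) (c 0 3 0 1)
    (c 1 0 0 3) (c 0 1 0 3) (c 2 2 0 0) (c 2 0 0 2) (c 0 2 0 2) (c 2 1 0 1) (c 1 2 0 1)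
    (c 1 1 0 2) (by
      intro x y z hx hy hz
      have hx0 := hcube x _ (by norm_num) hx
      have h := hv ![x, y, 0, z] ⟨fun h => hx0 (by simpa using congrFun h 0), by
        rw [labs_sing]
        simp [hx, hy, hz, hr]
        norm_num⟩
      rw [hc] at h
      simp only [map_add, map_mul, map_pow, eval_C, eval_X, Matrix.cons_val] at h
      linear_combination h)
  have t3 := ternary o ho 2 2 r (by norm_num) (by norm_num) hr0
    (c 4 0 0 0) (c 0 4 0 0) (c 0 0 4 0) (c 3 1 0 0) (c 3 0 1 0) (c 1 3 0 0) (c 0 3 1 0)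
    (c 1 0 3 0) (c 0 1 3 0) (c 2 2 0 0) (c 2 0 2 0) (c 0 2 2 0) (c 2 1 1 0) (c 1 2 1 0)
    (c 1 1 2 0) (by
      intro x y z hx hy hz
      have hx0 := hcube x _ (by norm_num) hx
      have h := hv ![x, y, z, 0] ⟨fun h => hx0 (by simpa using congrFun h 0), by
        rw [labs_sing]
        simp [hx, hy, hz, hr]
        norm_num⟩
      rw [hc] at h
      simp only [map_add, map_mul, map_pow, eval_C, eval_X, Matrix.cons_val] at h
      linear_combination h)
  rw [hr] at t2 t3
  obtain ⟨⟨a1, a2, a3⟩, za1, za2, za3, za4, za5, za6⟩ := t0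
  obtain ⟨⟨b0, b2, b3⟩, zb1, zb2, zb3, zb4, zb5, zb6⟩ := t1
  obtain ⟨⟨c0, c1, c3⟩, zc1, zc2, zc3, zc4, zc5, zc6⟩ := t2
  obtain ⟨⟨d0, d1, d2⟩, zd1, zd2, zd3, zd4, zd5, zd6⟩ := t3
  rw [Submodule.mem_span_range_iff_exists_fun]
  refine ⟨![c 1 0 0 3, c 0 1 0 3, c 0 0 4 0 / 128, c 0 0 0 4 / 2, c 1 1 1 1], ?_⟩
  rw [hc]
  have E0 : c 4 0 0 0 = -16 * c 1 0 0 3 ∧ c 1 3 0 0 = 65 * c 1 0 0 3 ∧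
      c 1 0 3 0 = 8 * c 1 0 0 3 := by
    refine ⟨?_, ?_, ?_⟩ <;> grind
  have E1 : c 3 1 0 0 = 65 * c 0 1 0 3 ∧ c 0 4 0 0 = -16 * c 0 1 0 3 ∧
      c 0 1 3 0 = 8 * c 0 1 0 3 := by
    refine ⟨?_, ?_, ?_⟩ <;> grind
  obtain ⟨l, hl⟩ : ∃ l, c 0 0 4 0 = 128 * l := ⟨c 0 0 4 0 / 128, by ring⟩
  obtain ⟨m, hm⟩ : ∃ m, c 0 0 0 4 = 2 * m := ⟨c 0 0 0 4 / 2, by ring⟩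
  have E2 : c 3 0 1 0 = 392 * l ∧ c 0 3 1 0 = 392 * l ∧ c 0 0 1 3 = -65 * l := by
    refine ⟨?_, ?_, ?_⟩ <;> grind
  have E3 : c 3 0 0 1 = 49 * m ∧ c 0 3 0 1 = 49 * m ∧ c 0 0 3 1 = -65 * m := by
    refine ⟨?_, ?_, ?_⟩ <;> grind
  obtain ⟨u1, u2, u3⟩ := E0
  obtain ⟨v1, v2, v3⟩ := E1
  obtain ⟨w1, w2, w3⟩ := E2
  obtain ⟨y1, y2, y3⟩ := E3
  have hl' : 128 * l / 128 = l := by ring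
  have hm' : 2 * m / 2 = m := by ring
  simp only [za1, za2, za3, za4, za5, za6, zb1, zb2, zb3, zb4, zb5, zb6, zc1, zc2, zc3, zc4, zc5,
    zc6, zd1, zd2, zd3, zd4, zd5, zd6, u1, u2, u3, v1, v2, v3, w1, w2, w3, y1, y2, y3, hl, hm,
    hl', hm', labsQ, Fin.sum_univ_five, Matrix.cons_val, smul_eq_C_mul, C_mul, C_0, C_1]
  ring

theorem finrank_quartics_through_labs_cusps :
    Module.finrank ℂ ↥quarticsThroughLabsCusps = 5 := by
  have : quarticsThroughLabsCusps = Submodule.span ℂ (Set.range labsQ) := by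
    apply le_antisymm
    · exact fun f hf => mem_span f hf
    · rw [Submodule.span_le]
      rintro _ ⟨i, rfl⟩
      exact labsQ_mem i
  rw [this, finrank_span_eq_card labsQ_indep]
  simp
end

section
/- The set of singular points of the octic surface G₈ = 0 in ℙ³(ℂ) equals the set of points represented by z ∈ ℂ⁴∖{0} for which the vector (z₀⁴, z₁⁴, z₂⁴, z₃⁴) is a nonzero scalar multiple of one of the four vectors (0, 1, 1, 8), (1, 0, 1, 8), (1, 1, 0, −49), (8, 8, −49, 0); this set has exactly 64 elements. -/
open MvPolynomial

/-- The quartic form `A₄ = (8/9)z₀⁴ + (8/9)z₁⁴ − (64/63)z₂⁴ + (1/63)z₃⁴`. -/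
noncomputable def labsA4 : MvPolynomial (Fin 4) ℂ :=
  C (8/9 : ℂ) * X 0 ^ 4 + C (8/9 : ℂ) * X 1 ^ 4 - C (64/63 : ℂ) * X 2 ^ 4 + C (1/63 : ℂ) * X 3 ^ 4

/-- The quartic form `B₄ = (1/9)z₀⁴ + (1/9)z₁⁴ + (1/63)z₂⁴ − (1/63)z₃⁴`. -/
noncomputable def labsB4 : MvPolynomial (Fin 4) ℂ :=
  C (1/9 : ℂ) * X 0 ^ 4 + C (1/9 : ℂ) * X 1 ^ 4 + C (1/63 : ℂ) * X 2 ^ 4 - C (1/63 : ℂ) * X 3 ^ 4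

/-- The octic `G₈ = (z₀z₁)⁴ − A₄·B₄` of Labs, with `64` A₃-points. -/
noncomputable def labsG8 : MvPolynomial (Fin 4) ℂ := (X 0 * X 1) ^ 4 - labsA4 * labsB4

lemma alg (a b c d : ℂ) (h : ¬ (a = 0 ∧ b = 0 ∧ c = 0 ∧ d = 0))
  (h0 : a = 0 ∨ b - (8/9*((1/9)*a+(1/9)*b+(1/63)*c-(1/63)*d) + (1/9)*((8/9)*a+(8/9)*b-(64/63)*c+(1/63)*d)) = 0)
  (h1 : b = 0 ∨ a - (8/9*((1/9)*a+(1/9)*b+(1/63)*c-(1/63)*d) + (1/9)*((8/9)*a+(8/9)*b-(64/63)*c+(1/63)*d)) = 0)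
  (h2 : c = 0 ∨ (-(64/63)*((1/9)*a+(1/9)*b+(1/63)*c-(1/63)*d) + (1/63)*((8/9)*a+(8/9)*b-(64/63)*c+(1/63)*d)) = 0)
  (h3 : d = 0 ∨ ((1/63)*((1/9)*a+(1/9)*b+(1/63)*c-(1/63)*d) - (1/63)*((8/9)*a+(8/9)*b-(64/63)*c+(1/63)*d)) = 0) :
  (a = 0 ∧ c = b ∧ d = 8 * b) ∨ (b = 0 ∧ c = a ∧ d = 8 * a) ∨ (b = a ∧ c = 0 ∧ d = -49 * a) ∨ (b = a ∧ c = (-49/8) * a ∧ d = 0) := by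
  rcases h0 with h0 | h0 <;> rcases h1 with h1 | h1 <;> rcases h2 with h2 | h2 <;> rcases h3 with h3 | h3 <;> grind

/-- The eighth-degree surface is singular at `z` exactly when the fourth powers of the
coordinates are proportional to one of the four tangency points. -/
lemma sing_iff_s16 (z : Fin 4 → ℂ) (hz : z ≠ 0) :
    (∀ i : Fin 4, eval z (pderiv i labsG8) = 0) ↔
    ((z 0 ^ 4 = 0 ∧ z 2 ^ 4 = z 1 ^ 4 ∧ z 3 ^ 4 = 8 * z 1 ^ 4) ∨
     (z 1 ^ 4 = 0 ∧ z 2 ^ 4 = z 0 ^ 4 ∧ z 3 ^ 4 = 8 * z 0 ^ 4) ∨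
     (z 1 ^ 4 = z 0 ^ 4 ∧ z 2 ^ 4 = 0 ∧ z 3 ^ 4 = -49 * z 0 ^ 4) ∨
     (z 1 ^ 4 = z 0 ^ 4 ∧ z 2 ^ 4 = (-49/8) * z 0 ^ 4 ∧ z 3 ^ 4 = 0)) := by
  simp only [Fin.forall_fin_succ, labsG8, labsA4, labsB4]
  constructor
  · intro h
    simp [pderiv_X, Pi.single_apply, Derivation.leibniz, Derivation.leibniz_pow] at h
    obtain ⟨h0, h1, h2, h3⟩ := h
    apply alg
    · rintro ⟨g0, g1, g2, g3⟩
      apply hz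
      funext i
      fin_cases i
      · exact pow_eq_zero_iff (by norm_num) |>.1 g0
      · exact pow_eq_zero_iff (by norm_num) |>.1 g1
      · exact pow_eq_zero_iff (by norm_num) |>.1 g2
      · exact pow_eq_zero_iff (by norm_num) |>.1 g3
    · rcases eq_or_ne (z 0) 0 with h | h
      · left; simp [h]
      · right; apply mul_left_cancel₀ (pow_ne_zero 3 h); linear_combination h0 / 4
    · rcases eq_or_ne (z 1) 0 with h | h
      · left; simp [h]
      · right; apply mul_left_cancel₀ (pow_ne_zero 3 h); linear_combination h1 / 4
    · rcases eq_or_ne (z 2) 0 with h | h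
      · left; simp [h]
      · right; apply mul_left_cancel₀ (pow_ne_zero 3 h); linear_combination -h2 / 4
    · rcases eq_or_ne (z 3) 0 with h | h
      · left; simp [h]
      · right; apply mul_left_cancel₀ (pow_ne_zero 3 h); linear_combination -h3 / 4
  · intro h
    simp [pderiv_X, Pi.single_apply, Derivation.leibniz, Derivation.leibniz_pow]
    rcases h with ⟨g0, g1, g2⟩ | ⟨g0, g1, g2⟩ | ⟨g0, g1, g2⟩ | ⟨g0, g1, g2⟩
    · have g : z 0 = 0 := pow_eq_zero_iff (by norm_num) |>.1 g0
      refine ⟨?_, ?_, ?_, ?_⟩ <;> grind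
    · have g : z 1 = 0 := pow_eq_zero_iff (by norm_num) |>.1 g0
      refine ⟨?_, ?_, ?_, ?_⟩ <;> grind
    · have g : z 2 = 0 := pow_eq_zero_iff (by norm_num) |>.1 g1
      refine ⟨?_, ?_, ?_, ?_⟩ <;> grind
    · have g : z 3 = 0 := pow_eq_zero_iff (by norm_num) |>.1 g2
      refine ⟨?_, ?_, ?_, ?_⟩ <;> grind

lemma scalar_iff (z : Fin 4 → ℂ) (hz : z ≠ 0) :
    (∃ c : ℂ, c ≠ 0 ∧
              ((fun i => z i ^ 4) = c • ![(0 : ℂ), 1, 1, 8] ∨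
               (fun i => z i ^ 4) = c • ![(1 : ℂ), 0, 1, 8] ∨
               (fun i => z i ^ 4) = c • ![(1 : ℂ), 1, 0, -49] ∨
               (fun i => z i ^ 4) = c • ![(8 : ℂ), 8, -49, 0])) ↔
    ((z 0 ^ 4 = 0 ∧ z 2 ^ 4 = z 1 ^ 4 ∧ z 3 ^ 4 = 8 * z 1 ^ 4) ∨
     (z 1 ^ 4 = 0 ∧ z 2 ^ 4 = z 0 ^ 4 ∧ z 3 ^ 4 = 8 * z 0 ^ 4) ∨
     (z 1 ^ 4 = z 0 ^ 4 ∧ z 2 ^ 4 = 0 ∧ z 3 ^ 4 = -49 * z 0 ^ 4) ∨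
     (z 1 ^ 4 = z 0 ^ 4 ∧ z 2 ^ 4 = (-49/8) * z 0 ^ 4 ∧ z 3 ^ 4 = 0)) := by
  have hz' : ¬ (z 0 ^ 4 = 0 ∧ z 1 ^ 4 = 0 ∧ z 2 ^ 4 = 0 ∧ z 3 ^ 4 = 0) := by
    rintro ⟨g0, g1, g2, g3⟩
    apply hz
    funext i
    fin_cases i
    · exact pow_eq_zero_iff (by norm_num) |>.1 g0
    · exact pow_eq_zero_iff (by norm_num) |>.1 g1
    · exact pow_eq_zero_iff (by norm_num) |>.1 g2
    · exact pow_eq_zero_iff (by norm_num) |>.1 g3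
  simp only [funext_iff, Fin.forall_fin_succ]
  simp only [Pi.smul_apply, smul_eq_mul, Matrix.cons_val_zero, Matrix.cons_val_succ,
    Fin.succ_zero_eq_one, Fin.succ_one_eq_two, IsEmpty.forall_iff, and_true,
    show (Fin.succ 2 : Fin 4) = 3 from rfl, show (Fin.succ 1 : Fin 4) = 2 from rfl, 
    Matrix.cons_val]
  generalize z 0 ^ 4 = a at *
  generalize z 1 ^ 4 = b at *
  generalize z 2 ^ 4 = c at *
  generalize z 3 ^ 4 = d at *
  constructor
  · rintro ⟨k, hk, h | h | h | h⟩ <;> grind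
  · rintro (h | h | h | h)
    · exact ⟨b, by grind⟩
    · exact ⟨a, by grind⟩
    · exact ⟨a, by grind⟩
    · exact ⟨a / 8, by grind⟩

lemma card_roots (a : ℂ) (ha : a ≠ 0) : ({x : ℂ | x ^ 4 = a} : Set ℂ).ncard = 4 := by
  classical
  have hζ := Complex.isPrimitiveRoot_exp 4 (by norm_num)
  have h1 : ({x : ℂ | x ^ 4 = a} : Set ℂ) = ((Polynomial.nthRoots 4 a).toFinset : Set ℂ) := by
    ext x
    simp [Polynomial.mem_nthRoots]
  rw [h1, Set.ncard_coe_finset, Multiset.toFinset_card_of_nodup (hζ.nthRoots_nodup ha),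
    hζ.card_nthRoots, if_pos]
  obtain ⟨x, hx⟩ := IsAlgClosed.exists_pow_nat_eq a (n := 4) (by norm_num)
  exact ⟨x, hx⟩

lemma ncard_image (f : ℂ × ℂ → Projectivization ℂ (Fin 4 → ℂ)) (hf : Function.Injective f)
    (a b : ℂ) (ha : a ≠ 0) (hb : b ≠ 0) :
    (f '' ({x : ℂ | x ^ 4 = a} ×ˢ {x : ℂ | x ^ 4 = b})).ncard = 16 := by
  rw [Set.ncard_image_of_injective _ hf, Set.ncard_prod, card_roots a ha, card_roots b hb]

lemma fin_image (f : ℂ × ℂ → Projectivization ℂ (Fin 4 → ℂ)) (hf : Function.Injective f)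
    (a b : ℂ) (ha : a ≠ 0) (hb : b ≠ 0) :
    (f '' ({x : ℂ | x ^ 4 = a} ×ˢ {x : ℂ | x ^ 4 = b})).Finite :=
  Set.finite_of_ncard_ne_zero (by rw [ncard_image f hf a b ha hb]; norm_num)

noncomputable def f1 (p : ℂ × ℂ) : Projectivization ℂ (Fin 4 → ℂ) :=
  Projectivization.mk ℂ ![0, 1, p.1, p.2] (fun h => by simpa using congrFun h 1)

noncomputable def f2 (p : ℂ × ℂ) : Projectivization ℂ (Fin 4 → ℂ) :=
  Projectivization.mk ℂ ![1, 0, p.1, p.2] (fun h => by simpa using congrFun h 0)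

noncomputable def f3 (p : ℂ × ℂ) : Projectivization ℂ (Fin 4 → ℂ) :=
  Projectivization.mk ℂ ![1, p.1, 0, p.2] (fun h => by simpa using congrFun h 0)

noncomputable def f4 (p : ℂ × ℂ) : Projectivization ℂ (Fin 4 → ℂ) :=
  Projectivization.mk ℂ ![1, p.1, p.2, 0] (fun h => by simpa using congrFun h 0)

/-- Equality of points of projective space, in coordinates. -/
lemma mk_coord {a b c d a' b' c' d' : ℂ} (h h')
    (e : Projectivization.mk ℂ ![a, b, c, d] h = Projectivization.mk ℂ ![a', b', c', d'] h') :
    ∃ t : ℂ, t * a' = a ∧ t * b' = b ∧ t * c' = c ∧ t * d' = d := by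
  rw [Projectivization.mk_eq_mk_iff'] at e
  obtain ⟨t, ht⟩ := e
  exact ⟨t, by simpa using congrFun ht 0, by simpa using congrFun ht 1,
    by simpa using congrFun ht 2, by simpa using congrFun ht 3⟩

lemma f1_inj : Function.Injective f1 := by
  rintro ⟨a, b⟩ ⟨a', b'⟩ h
  obtain ⟨t, h0, h1, h2, h3⟩ := mk_coord _ _ h
  grind

lemma f2_inj : Function.Injective f2 := by
  rintro ⟨a, b⟩ ⟨a', b'⟩ h
  obtain ⟨t, h0, h1, h2, h3⟩ := mk_coord _ _ h
  grind

lemma f3_inj : Function.Injective f3 := by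
  rintro ⟨a, b⟩ ⟨a', b'⟩ h
  obtain ⟨t, h0, h1, h2, h3⟩ := mk_coord _ _ h
  grind

lemma f4_inj : Function.Injective f4 := by
  rintro ⟨a, b⟩ ⟨a', b'⟩ h
  obtain ⟨t, h0, h1, h2, h3⟩ := mk_coord _ _ h
  grind

lemma mk_scale (z w : Fin 4 → ℂ) (hz : z ≠ 0) (hw : w ≠ 0) (t : ℂ) (h0 : t * z 0 = w 0)
    (h1 : t * z 1 = w 1) (h2 : t * z 2 = w 2) (h3 : t * z 3 = w 3) :
    Projectivization.mk ℂ w hw = Projectivization.mk ℂ z hz := by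
  rw [Projectivization.mk_eq_mk_iff']
  refine ⟨t, ?_⟩
  funext i
  fin_cases i
  · exact h0
  · exact h1
  · exact h2
  · exact h3

lemma set_eq :
    {p : Projectivization ℂ (Fin 4 → ℂ) |
        ∃ (z : Fin 4 → ℂ) (hz : z ≠ 0), Projectivization.mk ℂ z hz = p ∧
          ∀ i : Fin 4, eval z (pderiv i labsG8) = 0} =
    ((f1 '' ({x : ℂ | x ^ 4 = 1} ×ˢ {x : ℂ | x ^ 4 = 8})) ∪
     (f2 '' ({x : ℂ | x ^ 4 = 1} ×ˢ {x : ℂ | x ^ 4 = 8}))) ∪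
    ((f3 '' ({x : ℂ | x ^ 4 = 1} ×ˢ {x : ℂ | x ^ 4 = -49})) ∪
     (f4 '' ({x : ℂ | x ^ 4 = 1} ×ˢ {x : ℂ | x ^ 4 = -49/8}))) := by
  ext p
  constructor
  · rintro ⟨z, hz, rfl, h⟩
    have hz' : ¬ (z 0 = 0 ∧ z 1 = 0 ∧ z 2 = 0 ∧ z 3 = 0) := by
      rintro ⟨g0, g1, g2, g3⟩
      apply hz
      funext i
      fin_cases i
      · exact g0
      · exact g1
      · exact g2
      · exact g3
    have key : ∀ x y k : ℂ, y ≠ 0 → x ^ 4 = k * y ^ 4 → (x / y) ^ 4 = k := by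
      intro x y k hy hxy
      rw [div_pow, hxy, mul_div_cancel_right₀ _ (pow_ne_zero 4 hy)]
    have zero : ∀ x k : ℂ, x ^ 4 = k * 0 ^ 4 → x = 0 := by
      intro x k hx
      have : x ^ 4 = 0 := by rw [hx]; ring
      exact pow_eq_zero_iff (by norm_num) |>.1 this
    have zero' : ∀ x : ℂ, x ^ 4 = 0 → x = 0 := fun x hx => pow_eq_zero_iff (by norm_num) |>.1 hx
    rcases (sing_iff_s16 z hz).1 h with ⟨g0, g1, g2⟩ | ⟨g0, g1, g2⟩ | ⟨g0, g1, g2⟩ | ⟨g0, g1, g2⟩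
    · have hne : z 1 ≠ 0 := by
        intro h0
        rw [h0] at g1 g2
        exact hz' ⟨zero' _ g0, h0, zero _ 1 (by rw [g1]; ring), zero _ _ g2⟩
      refine Or.inl (Or.inl ⟨(z 2 / z 1, z 3 / z 1),
        ⟨key _ _ _ hne (by rw [g1]; ring), key _ _ _ hne g2⟩, ?_⟩)
      apply mk_scale _ _ _ _ (z 1)⁻¹ <;> simp <;> grind
    · have hne : z 0 ≠ 0 := by
        intro h0
        rw [h0] at g1 g2
        exact hz' ⟨h0, zero' _ g0, zero _ 1 (by rw [g1]; ring), zero _ _ g2⟩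
      refine Or.inl (Or.inr ⟨(z 2 / z 0, z 3 / z 0),
        ⟨key _ _ _ hne (by rw [g1]; ring), key _ _ _ hne g2⟩, ?_⟩)
      apply mk_scale _ _ _ _ (z 0)⁻¹ <;> simp <;> grind
    · have hne : z 0 ≠ 0 := by
        intro h0
        rw [h0] at g0 g2
        exact hz' ⟨h0, zero _ 1 (by rw [g0]; ring), zero' _ g1, zero _ _ g2⟩
      refine Or.inr (Or.inl ⟨(z 1 / z 0, z 3 / z 0),
        ⟨key _ _ _ hne (by rw [g0]; ring), key _ _ _ hne g2⟩, ?_⟩)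
      apply mk_scale _ _ _ _ (z 0)⁻¹ <;> simp <;> grind
    · have hne : z 0 ≠ 0 := by
        intro h0
        rw [h0] at g0 g1
        exact hz' ⟨h0, zero _ 1 (by rw [g0]; ring), zero _ _ g1, zero' _ g2⟩
      refine Or.inr (Or.inr ⟨(z 1 / z 0, z 2 / z 0),
        ⟨key _ _ _ hne (by rw [g0]; ring), key _ _ _ hne g1⟩, ?_⟩)
      apply mk_scale _ _ _ _ (z 0)⁻¹ <;> simp <;> grind
  · rintro ((⟨⟨a, b⟩, ⟨ha, hb⟩, rfl⟩ | ⟨⟨a, b⟩, ⟨ha, hb⟩, rfl⟩) |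
      (⟨⟨a, b⟩, ⟨ha, hb⟩, rfl⟩ | ⟨⟨a, b⟩, ⟨ha, hb⟩, rfl⟩)) <;>
    simp only [Set.mem_ofPred_eq] at ha hb <;>
    refine ⟨_, _, rfl, (sing_iff_s16 _ ?_).2 ?_⟩
    all_goals first | (intro h; simpa using congrFun h 0) | (intro h; simpa using congrFun h 1) | simp [ha, hb]

/-- The singular locus of the Labs octic `G₈ = 0` in `ℙ³(ℂ)` is exactly the set of
points represented by `z` with `(z₀⁴, z₁⁴, z₂⁴, z₃⁴)` a nonzero scalar multiple of one
of `(0,1,1,8)`, `(1,0,1,8)`, `(1,1,0,−49)`, `(8,8,−49,0)`; it has exactly `64` points. -/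
theorem sing_labs_octic :
    ({p : Projectivization ℂ (Fin 4 → ℂ) |
        ∃ (z : Fin 4 → ℂ) (hz : z ≠ 0), Projectivization.mk ℂ z hz = p ∧
          ∀ i : Fin 4, eval z (pderiv i labsG8) = 0}
      = {p : Projectivization ℂ (Fin 4 → ℂ) |
          ∃ (z : Fin 4 → ℂ) (hz : z ≠ 0), Projectivization.mk ℂ z hz = p ∧
            ∃ c : ℂ, c ≠ 0 ∧
              ((fun i => z i ^ 4) = c • ![(0 : ℂ), 1, 1, 8] ∨
               (fun i => z i ^ 4) = c • ![(1 : ℂ), 0, 1, 8] ∨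
               (fun i => z i ^ 4) = c • ![(1 : ℂ), 1, 0, -49] ∨
               (fun i => z i ^ 4) = c • ![(8 : ℂ), 8, -49, 0])}) ∧
    {p : Projectivization ℂ (Fin 4 → ℂ) |
        ∃ (z : Fin 4 → ℂ) (hz : z ≠ 0), Projectivization.mk ℂ z hz = p ∧
          ∀ i : Fin 4, eval z (pderiv i labsG8) = 0}.ncard = 64 := by
  refine ⟨?_, ?_⟩
  · ext p
    constructor
    · rintro ⟨z, hz, hp, h⟩
      exact ⟨z, hz, hp, (scalar_iff z hz).2 ((sing_iff_s16 z hz).1 h)⟩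
    · rintro ⟨z, hz, hp, h⟩
      exact ⟨z, hz, hp, (sing_iff_s16 z hz).2 ((scalar_iff z hz).1 h)⟩
  · have n0 : (1 : ℂ) ≠ 0 := by norm_num
    have n1 : (8 : ℂ) ≠ 0 := by norm_num
    have n2 : (-49 : ℂ) ≠ 0 := by norm_num
    have n3 : (-49/8 : ℂ) ≠ 0 := by norm_num
    have F1 := fin_image f1 f1_inj 1 8 n0 n1
    have F2 := fin_image f2 f2_inj 1 8 n0 n1
    have F3 := fin_image f3 f3_inj 1 (-49) n0 n2
    have F4 := fin_image f4 f4_inj 1 (-49/8) n0 n3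
    rw [set_eq, Set.ncard_union_eq ?_ (F1.union F2) (F3.union F4),
      Set.ncard_union_eq ?_ F1 F2, Set.ncard_union_eq ?_ F3 F4,
      ncard_image f1 f1_inj 1 8 n0 n1, ncard_image f2 f2_inj 1 8 n0 n1,
      ncard_image f3 f3_inj 1 (-49) n0 n2, ncard_image f4 f4_inj 1 (-49/8) n0 n3]
    · rw [Set.disjoint_left]
      rintro _ ⟨⟨a, b⟩, ⟨ha, hb⟩, rfl⟩ ⟨⟨a', b'⟩, ⟨ha', hb'⟩, h⟩
      simp only [Set.mem_ofPred_eq] at ha hb ha' hb'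
      obtain ⟨t, h0, h1, h2, h3⟩ := mk_coord _ _ h
      grind
    · rw [Set.disjoint_left]
      rintro _ ⟨⟨a, b⟩, ⟨ha, hb⟩, rfl⟩ ⟨⟨a', b'⟩, ⟨ha', hb'⟩, h⟩
      simp only [Set.mem_ofPred_eq] at ha hb ha' hb'
      obtain ⟨t, h0, h1, h2, h3⟩ := mk_coord _ _ h
      grind
    · rw [Set.disjoint_left]
      rintro _ (⟨⟨a, b⟩, ⟨ha, hb⟩, rfl⟩ | ⟨⟨a, b⟩, ⟨ha, hb⟩, rfl⟩)
        (⟨⟨a', b'⟩, ⟨ha', hb'⟩, h⟩ | ⟨⟨a', b'⟩, ⟨ha', hb'⟩, h⟩) <;>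
      simp only [Set.mem_ofPred_eq] at ha hb ha' hb' <;>
      obtain ⟨t, h0, h1, h2, h3⟩ := mk_coord _ _ h <;>
      grind
end
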